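/- For every set S of n points in the plane in general position and any two trees T, T' ∈ 𝒯(S), the tree T can be transformed into T' by a sequence of fewer than 8n simultaneous empty-triangle rotations. -/

import Mathlib

open scoped Classical

noncomputable section

/-- Points in the plane. -/
abbrev Pt : Type := ℝ × ℝ

/-- The closed straight-line segment spanned by an (unordered) edge. -/
def segOf (e : Sym2 Pt) : Set Pt :=
  Sym2.lift ⟨fun p q => segment ℝ p q, fun p q => segment_symm ℝ p q⟩ e

/-- The set of endpoints of an edge. -/
def epts (e : Sym2 Pt) : Set Pt := {p | p ∈ e}

/-- Two edges intersect in at most common endpoints (they do not cross). -/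
def NoCrossPair (e f : Sym2 Pt) : Prop := segOf e ∩ segOf f ⊆ epts e ∩ epts f

/-- A set of edges is noncrossing: any two distinct edges meet in at most a common endpoint. -/
def NoCross (E : Finset (Sym2 Pt)) : Prop := ∀ e ∈ E, ∀ f ∈ E, e ≠ f → NoCrossPair e f

/-- `E` is the edge set of a noncrossing straight-line spanning tree on the point set `S`:
all edges are nondegenerate with endpoints in `S`, pairwise noncrossing, there are
`|S| - 1` of them, and they connect all of `S`. -/
def IsPST (S : Finset Pt) (E : Finset (Sym2 Pt)) : Prop :=
  (∀ e ∈ E, ¬ e.IsDiag ∧ ∀ p ∈ e, p ∈ S) ∧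
  NoCross E ∧ E.card + 1 = S.card ∧
  ∀ p ∈ S, ∀ q ∈ S, Relation.ReflTransGen (fun a b => s(a, b) ∈ E) p q

/-- `S` is in general position: no three of its points are collinear. -/
def GenPos (S : Finset Pt) : Prop :=
  ∀ p ∈ S, ∀ q ∈ S, ∀ r ∈ S, p ≠ q → p ≠ r → q ≠ r → ¬ Collinear ℝ ({p, q, r} : Set Pt)

/-- `S` is in convex position: every point of `S` is a vertex of the convex hull of `S`. -/
def ConvexPos (S : Finset Pt) : Prop :=
  ∀ p ∈ S, p ∉ convexHull ℝ ((S : Set Pt) \ {p})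

/-- The open interior of the triangle with vertices `p`, `q`, `r`. -/
def triInt (p q r : Pt) : Set Pt := interior (convexHull ℝ ({p, q, r} : Set Pt))

/-- `y` can be reached from `x` by a sequence of at most `m` `step`-operations. -/
def ReachesIn {α : Type*} (step : α → α → Prop) (m : ℕ) (x y : α) : Prop :=
  ∃ k ≤ m, ∃ f : ℕ → α, f 0 = x ∧ f k = y ∧ ∀ i < k, step (f i) (f (i + 1))

/-- A simultaneous rotation from `E₁` to `E₂`: a bijection `π` between the removed and the
inserted edges such that each `e` shares an endpoint with `π e` and `π e` crosses no edge
of `E₁`. -/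
def SimRotation (S : Finset Pt) (E₁ E₂ : Finset (Sym2 Pt)) : Prop :=
  IsPST S E₁ ∧ IsPST S E₂ ∧ ∃ π : Sym2 Pt → Sym2 Pt,
    Set.BijOn π ↑(E₁ \ E₂) ↑(E₂ \ E₁) ∧
    ∀ e ∈ E₁ \ E₂, (∃ p, p ∈ e ∧ p ∈ π e) ∧ ∀ f ∈ E₁, NoCrossPair (π e) f

/-- An empty-triangle rotation replaces an edge `pq` by an adjacent edge `pr` such that
no edge of either tree meets the interior of the triangle `pqr`. -/
def EmptyTriRot (S : Finset Pt) (E₁ E₂ : Finset (Sym2 Pt)) : Prop :=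
  IsPST S E₁ ∧ IsPST S E₂ ∧ ∃ p q r : Pt,
    E₁ \ E₂ = {s(p, q)} ∧ E₂ \ E₁ = {s(p, r)} ∧
    ∀ g ∈ E₁ ∪ E₂, Disjoint (segOf g) (triInt p q r)

/-- A simultaneous empty-triangle rotation. -/
def SimEmptyTriRot (S : Finset Pt) (E₁ E₂ : Finset (Sym2 Pt)) : Prop :=
  IsPST S E₁ ∧ IsPST S E₂ ∧ ∃ π : Sym2 Pt → Sym2 Pt,
    Set.BijOn π ↑(E₁ \ E₂) ↑(E₂ \ E₁) ∧
    ∀ e ∈ E₁ \ E₂, ∃ p q r : Pt, e = s(p, q) ∧ π e = s(p, r) ∧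
      ∀ g ∈ E₁ ∪ E₂, Disjoint (segOf g) (triInt p q r)

/-- An edge slide replaces `pq` by `pr`, where `qr` is an edge of both trees and no edge of
either tree meets the interior of the triangle `pqr`. -/
def EdgeSlide (S : Finset Pt) (E₁ E₂ : Finset (Sym2 Pt)) : Prop :=
  IsPST S E₁ ∧ IsPST S E₂ ∧ ∃ p q r : Pt,
    E₁ \ E₂ = {s(p, q)} ∧ E₂ \ E₁ = {s(p, r)} ∧
    s(q, r) ∈ E₁ ∧ s(q, r) ∈ E₂ ∧
    ∀ g ∈ E₁ ∪ E₂, Disjoint (segOf g) (triInt p q r)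

/-- A simultaneous edge slide. -/
def SimEdgeSlide (S : Finset Pt) (E₁ E₂ : Finset (Sym2 Pt)) : Prop :=
  IsPST S E₁ ∧ IsPST S E₂ ∧ ∃ π : Sym2 Pt → Sym2 Pt,
    Set.BijOn π ↑(E₁ \ E₂) ↑(E₂ \ E₁) ∧
    ∀ e ∈ E₁ \ E₂, ∃ p q r : Pt, e = s(p, q) ∧ π e = s(p, r) ∧
      s(q, r) ∈ E₁ ∧ s(q, r) ∈ E₂ ∧
      ∀ g ∈ E₁ ∪ E₂, Disjoint (segOf g) (triInt p q r)

/-- `e` is an edge of the convex hull of `S`: it joins two distinct points of `S` and its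
segment lies on the boundary of the convex hull of `S`. -/
def IsHullEdge (S : Finset Pt) (e : Sym2 Pt) : Prop :=
  ∃ u v : Pt, e = s(u, v) ∧ u ∈ S ∧ v ∈ S ∧ u ≠ v ∧
    segment ℝ u v ⊆ frontier (convexHull ℝ (S : Set Pt))

/-- The spanning star centered at `v`. -/
def starAt (S : Finset Pt) (v : Pt) : Finset (Sym2 Pt) := (S.erase v).image (fun w => s(v, w))

/-- An edge-labeled tree: an edge set together with a labeling function. -/
abbrev LTree := Finset (Sym2 Pt) × (Sym2 Pt → ℕ)

/-- `T` is an edge-labeled noncrossing straight-line spanning tree on `S`: its edge set is in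
`𝒯(S)` and its labeling is a bijection from the edges onto `{1, …, |S| - 1}`
(normalized to `0` on non-edges). -/
def IsLabeledPST (S : Finset Pt) (T : LTree) : Prop :=
  IsPST S T.1 ∧ Set.BijOn T.2 ↑T.1 (Set.Icc 1 (S.card - 1)) ∧ ∀ e, e ∉ T.1 → T.2 e = 0

/-- A simultaneous exchange on edge-labeled trees: an arbitrary bijection between removed and
inserted edges transferring labels, all common edges keeping their labels. -/
def LabSimExchange (S : Finset Pt) (T₁ T₂ : LTree) : Prop :=
  IsLabeledPST S T₁ ∧ IsLabeledPST S T₂ ∧ ∃ π : Sym2 Pt → Sym2 Pt,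
    Set.BijOn π ↑(T₁.1 \ T₂.1) ↑(T₂.1 \ T₁.1) ∧
    (∀ e ∈ T₁.1 \ T₂.1, T₂.2 (π e) = T₁.2 e) ∧
    ∀ e ∈ T₁.1 ∩ T₂.1, T₂.2 e = T₁.2 e

/-- A rotation on edge-labeled trees: the removed and inserted edges share an endpoint and do
not cross, the label of the removed edge is transferred, and all other labels are kept. -/
def LabRotation (S : Finset Pt) (T₁ T₂ : LTree) : Prop :=
  IsLabeledPST S T₁ ∧ IsLabeledPST S T₂ ∧ ∃ e₁ e₂ : Sym2 Pt,
    T₁.1 \ T₂.1 = {e₁} ∧ T₂.1 \ T₁.1 = {e₂} ∧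
    (∃ p, p ∈ e₁ ∧ p ∈ e₂) ∧ NoCrossPair e₁ e₂ ∧
    T₂.2 e₂ = T₁.2 e₁ ∧ ∀ e ∈ T₁.1 ∩ T₂.1, T₂.2 e = T₁.2 e

/-- An edge slide on edge-labeled trees, transferring the label of the slid edge. -/
def LabEdgeSlide (S : Finset Pt) (T₁ T₂ : LTree) : Prop :=
  IsLabeledPST S T₁ ∧ IsLabeledPST S T₂ ∧ ∃ p q r : Pt,
    T₁.1 \ T₂.1 = {s(p, q)} ∧ T₂.1 \ T₁.1 = {s(p, r)} ∧
    s(q, r) ∈ T₁.1 ∧ s(q, r) ∈ T₂.1 ∧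
    (∀ g ∈ T₁.1 ∪ T₂.1, Disjoint (segOf g) (triInt p q r)) ∧
    T₂.2 (s(p, r)) = T₁.2 (s(p, q)) ∧ ∀ e ∈ T₁.1 ∩ T₂.1, T₂.2 e = T₁.2 e

/-!
Split `S` by a line that misses `S` into halves, and let `lr` be the lower bridge: the edge of the
convex hull of `S` that crosses the line at the lowest point. Extend the tree to a maximal plane
graph `G` and order the edges of `G` crossing the line by the height at which they meet it. Two
consecutive ones `xy`, `yz` bound an empty triangle `xyz` of `G`. Sweeping down from the top,
whenever the current crossing edge `xy` belongs to the tree, rotate it to `yz` or to the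
noncrossing edge `xz`, whichever reconnects the tree, until `lr` is the only crossing edge left.

For consecutive crossing edges `xy`, `yz`, either `xy` is the lowest crossing edge at `x` or `yz` is
the highest one at `z`; with `n` points this leaves at most `2n - 1` crossing edges in `G`, so the
sweep takes at most `2n - 2` rotations. Applying it to both trees leaves the edge `lr` together with
one tree on each half, and the two halves are treated recursively and in parallel. The number of
rotations `R n ≤ 2 (2n - 2) + R ⌈n / 2⌉` is therefore at most `8n - 8`.
-/

/-- The signed area determinant of `p`, `q`, `r`, as an affine function of `r`: it is positive
exactly when `r` lies to the left of the directed line from `p` to `q`. -/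
def orient (p q : Pt) : Pt →ᵃ[ℝ] ℝ :=
  ((q.1 - p.1) • LinearMap.snd ℝ ℝ ℝ - (q.2 - p.2) • LinearMap.fst ℝ ℝ ℝ).toAffineMap +
    AffineMap.const ℝ Pt ((q.2 - p.2) * p.1 - (q.1 - p.1) * p.2)

lemma orient_apply (p q r : Pt) :
    orient p q r = (q.1 - p.1) * (r.2 - p.2) - (q.2 - p.2) * (r.1 - p.1) := by
  simp only [orient, AffineMap.coe_add, LinearMap.coe_toAffineMap, AffineMap.coe_const,
    Pi.add_apply, LinearMap.sub_apply, LinearMap.smul_apply, LinearMap.snd_apply,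
    LinearMap.fst_apply, smul_eq_mul, Function.const_apply]
  ring

lemma orient_rotate (p q r : Pt) : orient p q r = orient q r p := by
  simp only [orient_apply]; ring

lemma orient_swap (p q r : Pt) : orient p q r = -orient q p r := by
  simp only [orient_apply]; ring

@[simp] lemma orient_apply_left (p q : Pt) : orient p q p = 0 := by
  simp only [orient_apply]; ring

@[simp] lemma orient_apply_right (p q : Pt) : orient p q q = 0 := by
  simp only [orient_apply]; ring

lemma ne_of_orient_ne_zero {p q r : Pt} (h : orient p q r ≠ 0) : p ≠ q := by
  rintro rfl
  exact h (by rw [orient_rotate, orient_apply_left])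

lemma exists_orient_ne_zero {p q : Pt} (h : p ≠ q) : ∃ r, orient p q r ≠ 0 := by
  refine ⟨(p.1 - (q.2 - p.2), p.2 + (q.1 - p.1)), fun h0 => h ?_⟩
  rw [orient_apply] at h0
  exact Prod.ext (by nlinarith [sq_nonneg (q.1 - p.1), sq_nonneg (q.2 - p.2)])
    (by nlinarith [sq_nonneg (q.1 - p.1), sq_nonneg (q.2 - p.2)])

lemma apply_lineMap_real (φ : Pt →ᵃ[ℝ] ℝ) (p q : Pt) (t : ℝ) :
    φ (AffineMap.lineMap p q t) = (1 - t) * φ p + t * φ q := by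
  rw [AffineMap.apply_lineMap, AffineMap.lineMap_apply_ring']; ring

lemma apply_eq_zero_of_mem_segment {φ : Pt →ᵃ[ℝ] ℝ} {p q r : Pt} (hp : φ p = 0) (hq : φ q = 0)
    (hr : r ∈ segment ℝ p q) : φ r = 0 := by
  rw [segment_eq_image_lineMap] at hr
  obtain ⟨t, -, rfl⟩ := hr
  rw [apply_lineMap_real, hp, hq, mul_zero, mul_zero, add_zero]

lemma orient_eq_zero_of_mem_segment {p q r : Pt} (h : r ∈ segment ℝ p q) : orient p q r = 0 :=
  apply_eq_zero_of_mem_segment (orient_apply_left p q) (orient_apply_right p q) h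

lemma collinear_of_orient_eq_zero {p q r : Pt} (hpq : p ≠ q) (h : orient p q r = 0) :
    Collinear ℝ ({p, q, r} : Set Pt) := by
  rw [orient_apply] at h
  have hdir : q.1 - p.1 ≠ 0 ∨ q.2 - p.2 ≠ 0 := by
    by_contra! hzero
    exact hpq (Prod.ext (by linarith [hzero.1]) (by linarith [hzero.2]))
  obtain ⟨t, ht⟩ : ∃ t : ℝ, r = t • (q - p) +ᵥ p := by
    rcases hdir with hdir | hdir
    · refine ⟨(r.1 - p.1) / (q.1 - p.1), Prod.ext ?_ ?_⟩ <;> simp <;> field_simp <;> linarith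
    · refine ⟨(r.2 - p.2) / (q.2 - p.2), Prod.ext ?_ ?_⟩ <;> simp <;> field_simp <;> linarith
  rw [collinear_iff_of_mem (p₀ := p) (by simp)]
  refine ⟨q - p, fun w hw => ?_⟩
  simp only [Set.mem_insert_iff, Set.mem_singleton_iff] at hw
  rcases hw with rfl | rfl | rfl
  · exact ⟨0, by simp⟩
  · exact ⟨1, by simp⟩
  · exact ⟨t, ht⟩

namespace GenPos

lemma subset {S S' : Finset Pt} (hS : GenPos S) (h : S' ⊆ S) : GenPos S' :=
  fun p hp q hq r hr => hS p (h hp) q (h hq) r (h hr)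

lemma eq_or_eq {S : Finset Pt} (hS : GenPos S) {p q r : Pt} (hp : p ∈ S) (hq : q ∈ S) (hr : r ∈ S)
    (hpq : p ≠ q) (h : orient p q r = 0) : r = p ∨ r = q := by
  by_contra! hne
  exact hS p hp q hq r hr hpq hne.1.symm hne.2.symm (collinear_of_orient_eq_zero hpq h)

end GenPos

/-! ### Barycentric coordinates -/

/-- The barycentric coordinate of the vertex `a` in the triangle `abc`; its junk value for a
degenerate triangle is `0`. -/
def weight (a b c : Pt) : Pt →ᵃ[ℝ] ℝ := (orient b c a)⁻¹ • orient b c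

lemma weight_apply (a b c p : Pt) : weight a b c p = (orient a b c)⁻¹ * orient b c p := by
  rw [orient_rotate a]; rfl

lemma weight_swap (a b c : Pt) : weight a b c = weight a c b := by
  ext p
  rw [weight_apply, weight_apply, orient_swap b c p, orient_rotate a c b, orient_rotate c b a,
    orient_swap b a c, inv_neg]
  ring

@[simp] lemma weight_apply_middle (a b c : Pt) : weight a b c b = 0 := by
  simp [weight_apply]

@[simp] lemma weight_apply_right (a b c : Pt) : weight a b c c = 0 := by
  simp [weight_apply]

/-- The closed triangle `abc` when `a`, `b`, `c` are not collinear; the whole plane otherwise,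
because then all weights are `0`. -/
def closedTriangle (a b c : Pt) : Set Pt :=
  {p | 0 ≤ weight a b c p ∧ 0 ≤ weight b c a p ∧ 0 ≤ weight c a b p}

/-- The open triangle `abc`, described by barycentric coordinates. -/
def openTriangle (a b c : Pt) : Set Pt :=
  {p | 0 < weight a b c p ∧ 0 < weight b c a p ∧ 0 < weight c a b p}

lemma openTriangle_swap (a b c : Pt) : openTriangle a b c = openTriangle b a c := by
  ext p
  simp only [openTriangle, Set.mem_ofPred_eq, weight_swap a, weight_swap b c, weight_swap c a]
  exact and_left_comm

lemma apply_pos_of_mem_triInt {φ : Pt →ᵃ[ℝ] ℝ} {a b c p u v : Pt} (hφ : φ u ≠ φ v)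
    (ha : 0 ≤ φ a) (hb : 0 ≤ φ b) (hc : 0 ≤ φ c) (hp : p ∈ triInt a b c) : 0 < φ p := by
  have hsurj : Function.Surjective φ := fun y =>
    ⟨AffineMap.lineMap u v ((y - φ u) / (φ v - φ u)), by
      have := sub_ne_zero.2 hφ.symm
      rw [apply_lineMap_real]; field_simp; ring⟩
  have hopen : IsOpenMap φ := (AffineMap.isOpenMap_linear_iff).1
    (LinearMap.isOpenMap_of_finiteDimensional _ ((AffineMap.linear_surjective_iff _).2 hsurj))
  have hcont : Continuous φ := AffineMap.continuous_of_finiteDimensional _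
  have hsub : convexHull ℝ {a, b, c} ⊆ φ ⁻¹' Set.Ici 0 :=
    convexHull_min (by simp [Set.insert_subset_iff, ha, hb, hc])
      ((convex_Ici 0).affine_preimage φ)
  have hmem := interior_mono hsub hp
  rwa [← hopen.preimage_interior_eq_interior_preimage hcont, interior_Ici] at hmem

section Triangle

variable {a b c : Pt}

lemma weight_apply_self (h : orient a b c ≠ 0) : weight a b c a = 1 := by
  rw [weight_apply, ← orient_rotate a, inv_mul_cancel₀ h]

lemma weight_add_weight_add_weight (h : orient a b c ≠ 0) (p : Pt) :
    weight a b c p + weight b c a p + weight c a b p = 1 := by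
  have hsum : orient b c p + orient c a p + orient a b p = orient a b c := by
    simp only [orient_apply]; ring
  rw [weight_apply, weight_apply, weight_apply, ← orient_rotate a, ← orient_rotate b,
    ← orient_rotate a, ← mul_add, ← mul_add, hsum, inv_mul_cancel₀ h]

lemma weight_smul_add (h : orient a b c ≠ 0) (p : Pt) :
    weight a b c p • a + weight b c a p • b + weight c a b p • c = p := by
  simp only [weight_apply, ← orient_rotate a, ← orient_rotate b]
  ext <;>
    simp only [Prod.fst_add, Prod.snd_add, Prod.smul_fst, Prod.smul_snd, smul_eq_mul] <;>
    field_simp <;> simp only [orient_apply] <;> ring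

lemma apply_eq_weight_mul_add (h : orient a b c ≠ 0) (φ : Pt →ᵃ[ℝ] ℝ) (p : Pt) :
    φ p = weight a b c p * φ a + weight b c a p * φ b + weight c a b p * φ c := by
  have hlin : ∀ q, φ q = φ.linear q + φ 0 := congrFun φ.decomp
  calc φ p = φ.linear (weight a b c p • a + weight b c a p • b + weight c a b p • c)
        + (weight a b c p + weight b c a p + weight c a b p) * φ 0 := by
        rw [weight_smul_add h, weight_add_weight_add_weight h, one_mul, ← hlin]
    _ = _ := by
        rw [hlin a, hlin b, hlin c]
        simp only [map_add, map_smul, smul_eq_mul]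
        ring

lemma mem_segment_of_weight_eq_zero (h : orient a b c ≠ 0) {p : Pt} (ha : weight a b c p = 0)
    (hb : 0 ≤ weight b c a p) (hc : 0 ≤ weight c a b p) : p ∈ segment ℝ b c := by
  refine ⟨_, _, hb, hc, ?_, ?_⟩
  · simpa [ha] using weight_add_weight_add_weight h p
  · simpa [ha] using weight_smul_add h p

lemma weight_add_weight_pos (h : orient a b c ≠ 0) {p : Pt} (hp : p ≠ a)
    (hb : 0 ≤ weight b c a p) (hc : 0 ≤ weight c a b p) :
    0 < weight b c a p + weight c a b p := by
  refine (add_nonneg hb hc).lt_of_ne fun h0 => hp ?_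
  obtain ⟨hb0, hc0⟩ := (add_eq_zero_iff_of_nonneg hb hc).1 h0.symm
  have ha1 : weight a b c p = 1 := by simpa [hb0, hc0] using weight_add_weight_add_weight h p
  simpa [ha1, hb0, hc0] using (weight_smul_add h p).symm

lemma weight_mul_sub_weight_mul (h : orient a b c ≠ 0) (p q : Pt) :
    weight c a b q * weight b c a p - weight b c a q * weight c a b p =
      (orient a b c)⁻¹ * orient a p q := by
  simp only [weight_apply, ← orient_rotate a, ← orient_rotate b]
  field_simp
  simp only [orient_apply]
  ring

lemma weight_pos_of_mem_triInt (h : orient a b c ≠ 0) {p : Pt} (hp : p ∈ triInt a b c) :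
    0 < weight a b c p :=
  apply_pos_of_mem_triInt (u := a) (v := b) (by simp [weight_apply_self h])
    (by simp [weight_apply_self h]) (by simp) (by simp) hp

lemma triInt_rotate (a b c : Pt) : triInt a b c = triInt b c a := by
  rw [triInt, triInt, Set.insert_comm a b, Set.pair_comm a c]

lemma triInt_subset_openTriangle (h : orient a b c ≠ 0) : triInt a b c ⊆ openTriangle a b c := by
  intro p hp
  have hb : orient b c a ≠ 0 := by rwa [← orient_rotate]
  have hc : orient c a b ≠ 0 := by rwa [← orient_rotate]
  exact ⟨weight_pos_of_mem_triInt h hp, weight_pos_of_mem_triInt hb (triInt_rotate a b c ▸ hp),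
    weight_pos_of_mem_triInt hc (triInt_rotate b c a ▸ triInt_rotate a b c ▸ hp)⟩

end Triangle

lemma triInt_swap (a b c : Pt) : triInt a b c = triInt b a c := by
  rw [triInt, triInt, Set.insert_comm]

lemma triInt_subset_of_convex {C : Set Pt} (hC : Convex ℝ C) {a b c : Pt} (ha : a ∈ C)
    (hb : b ∈ C) (hc : c ∈ C) : triInt a b c ⊆ C :=
  interior_subset.trans (convexHull_min (by simp [Set.insert_subset_iff, ha, hb, hc]) hC)

/-! ### Edges and plane graphs -/

lemma segOf_mk (a b : Pt) : segOf s(a, b) = segment ℝ a b := rfl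

lemma convex_segOf (e : Sym2 Pt) : Convex ℝ (segOf e) := by
  induction e with | _ a b => exact convex_segment a b

lemma mem_segOf_of_mem {e : Sym2 Pt} {a : Pt} (h : a ∈ e) : a ∈ segOf e := by
  obtain ⟨b, rfl⟩ := h
  exact left_mem_segment ℝ a b

lemma segOf_subset_of_convex {C : Set Pt} (hC : Convex ℝ C) {e : Sym2 Pt} (h : ∀ p ∈ e, p ∈ C) :
    segOf e ⊆ C := by
  induction e with | _ a b => exact hC.segment_subset (h a (by simp)) (h b (by simp))

lemma exists_mem_apply_le (φ : Pt →ᵃ[ℝ] ℝ) {e : Sym2 Pt} {w : Pt} (hw : w ∈ segOf e) :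
    ∃ a ∈ e, φ w ≤ φ a := by
  by_contra! h
  exact lt_irrefl (φ w)
    (segOf_subset_of_convex (C := φ ⁻¹' Set.Iio (φ w)) ((convex_Iio _).affine_preimage φ) h hw)

lemma exists_mem_le_apply (φ : Pt →ᵃ[ℝ] ℝ) {e : Sym2 Pt} {w : Pt} (hw : w ∈ segOf e) :
    ∃ a ∈ e, φ a ≤ φ w := by
  obtain ⟨a, ha, h⟩ := exists_mem_apply_le (-φ) hw
  exact ⟨a, ha, neg_le_neg_iff.1 h⟩

lemma apply_eq_zero_of_mem_segOf {φ : Pt →ᵃ[ℝ] ℝ} {e : Sym2 Pt} {v w : Pt} (hv : v ∈ segOf e)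
    (hw : w ∈ segOf e) (hvw : v ≠ w) (hv0 : φ v = 0) (hw0 : φ w = 0) {u : Pt}
    (hu : u ∈ segOf e) : φ u = 0 := by
  induction e with | _ a b =>
  rw [segOf_mk, segment_eq_image_lineMap] at hv hw
  obtain ⟨t, -, rfl⟩ := hv
  obtain ⟨s, -, rfl⟩ := hw
  have hts : t - s ≠ 0 := sub_ne_zero.2 fun h => hvw (by rw [h])
  rw [apply_lineMap_real] at hv0 hw0
  have hslope : φ b - φ a = 0 :=
    (mul_eq_zero.1 (by linarith : (t - s) * (φ b - φ a) = 0)).resolve_left hts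
  exact apply_eq_zero_of_mem_segment (by linear_combination hv0 - t * hslope)
    (by linear_combination hv0 + (1 - t) * hslope) hu

/-- `e` is a nondegenerate edge with both endpoints in `S`. -/
def IsEdgeOn (S : Finset Pt) (e : Sym2 Pt) : Prop := ¬ e.IsDiag ∧ ∀ p ∈ e, p ∈ S

/-- `G` is the edge set of a plane straight-line graph on `S`. The triangulations of `S` are its
maximal instances `Maximal (IsPlaneGraph S) G`. -/
structure IsPlaneGraph (S : Finset Pt) (G : Finset (Sym2 Pt)) : Prop where
  isEdgeOn : ∀ e ∈ G, IsEdgeOn S e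
  noCross : NoCross G

lemma isEdgeOn_mk {S : Finset Pt} {p q : Pt} : IsEdgeOn S s(p, q) ↔ p ≠ q ∧ p ∈ S ∧ q ∈ S := by
  simp [IsEdgeOn]

lemma NoCrossPair.symm {e f : Sym2 Pt} (h : NoCrossPair e f) : NoCrossPair f e := by
  rw [NoCrossPair, Set.inter_comm, Set.inter_comm (epts f)]
  exact h

lemma NoCross.insert {E : Finset (Sym2 Pt)} {e : Sym2 Pt} (hE : NoCross E)
    (he : ∀ f ∈ E, f ≠ e → NoCrossPair e f) : NoCross (insert e E) := by
  intro f hf g hg hfg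
  rcases Finset.mem_insert.1 hf with rfl | hfE <;> rcases Finset.mem_insert.1 hg with rfl | hgE
  · exact absurd rfl hfg
  · exact he g hgE hfg.symm
  · exact (he f hfE hfg).symm
  · exact hE f hfE g hgE hfg

namespace IsPlaneGraph

variable {S : Finset Pt} {G G' : Finset (Sym2 Pt)}

lemma subset (hG : IsPlaneGraph S G) (h : G' ⊆ G) : IsPlaneGraph S G' :=
  ⟨fun e he => hG.isEdgeOn e (h he), fun e he f hf => hG.noCross e (h he) f (h hf)⟩

lemma insert {e : Sym2 Pt} (hG : IsPlaneGraph S G) (he : IsEdgeOn S e)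
    (h : ∀ f ∈ G, f ≠ e → NoCrossPair e f) : IsPlaneGraph S (insert e G) :=
  ⟨Finset.forall_mem_insert _ _ _ |>.2 ⟨he, hG.isEdgeOn⟩, hG.noCross.insert h⟩

lemma exists_maximal (hG : IsPlaneGraph S G) : ∃ G', G ⊆ G' ∧ Maximal (IsPlaneGraph S) G' := by
  have hfin : {G | IsPlaneGraph S G}.Finite := by
    refine S.sym2.powerset.finite_toSet.subset fun G hG => ?_
    exact Finset.mem_coe.2 (Finset.mem_powerset.2 fun e he =>
      Finset.mem_sym2_iff.2 (hG.isEdgeOn e he).2)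
  exact hfin.exists_le_maximal hG

lemma mem_of_mem_segOf_inter (hG : IsPlaneGraph S G) {e f : Sym2 Pt} (he : e ∈ G) (hf : f ∈ G)
    (hef : e ≠ f) {w : Pt} (hwe : w ∈ segOf e) (hwf : w ∈ segOf f) : w ∈ e ∧ w ∈ f :=
  hG.noCross e he f hf hef ⟨hwe, hwf⟩

end IsPlaneGraph

section GeneralPosition

variable {S : Finset Pt} {G : Finset (Sym2 Pt)} {e f : Sym2 Pt} {p q v w : Pt}

lemma IsEdgeOn.eq_mk_of_orient_eq_zero (hS : GenPos S) (he : IsEdgeOn S e)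
    (hpq : IsEdgeOn S s(p, q)) (hv : v ∈ segOf e) (hw : w ∈ segOf e) (hvw : v ≠ w)
    (hv0 : orient p q v = 0) (hw0 : orient p q w = 0) : e = s(p, q) := by
  induction e with | _ a b =>
  obtain ⟨hab, ha, hb⟩ := isEdgeOn_mk.1 he
  obtain ⟨hpq, hp, hq⟩ := isEdgeOn_mk.1 hpq
  have hline : ∀ c ∈ s(a, b), orient p q c = 0 := fun c hc =>
    apply_eq_zero_of_mem_segOf hv hw hvw hv0 hw0 (mem_segOf_of_mem hc)
  rcases hS.eq_or_eq hp hq ha hpq (hline a (by simp)) with rfl | rfl <;>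
    rcases hS.eq_or_eq hp hq hb hpq (hline b (by simp)) with rfl | rfl
  · exact absurd rfl hab
  · rfl
  · exact Sym2.eq_swap
  · exact absurd rfl hab

lemma IsEdgeOn.mem_of_mem_segOf (hS : GenPos S) (he : IsEdgeOn S e) (hw : w ∈ segOf e)
    (hwS : w ∈ S) : w ∈ e := by
  induction e with | _ a b =>
  obtain ⟨hab, ha, hb⟩ := isEdgeOn_mk.1 he
  exact Sym2.mem_iff.2 (hS.eq_or_eq ha hb hwS hab (orient_eq_zero_of_mem_segment hw))

lemma exists_orient_neg_pos_of_not_noCrossPair (hS : GenPos S) (hpq : IsEdgeOn S s(p, q))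
    (hf : IsEdgeOn S f) (hne : f ≠ s(p, q)) (h : ¬ NoCrossPair s(p, q) f) :
    ∃ w ∈ openSegment ℝ p q, w ∈ segOf f ∧
      ∃ a ∈ f, ∃ b ∈ f, orient p q a < 0 ∧ 0 < orient p q b := by
  obtain ⟨w, ⟨hwpq, hwf⟩, hw⟩ := Set.not_subset.1 h
  have hwS : w ∉ S := fun hwS =>
    hw ⟨hpq.mem_of_mem_segOf hS hwpq hwS, hf.mem_of_mem_segOf hS hwf hwS⟩
  have hw0 : orient p q w = 0 := orient_eq_zero_of_mem_segment hwpq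
  have hoff : ∀ a ∈ f, orient p q a ≠ 0 := fun a ha ha0 =>
    hne (hf.eq_mk_of_orient_eq_zero hS hpq (mem_segOf_of_mem ha) hwf
      (fun haw => hwS (haw ▸ hf.2 a ha)) ha0 hw0)
  obtain ⟨a, ha, ha0⟩ := exists_mem_le_apply (orient p q) hwf
  obtain ⟨b, hb, hb0⟩ := exists_mem_apply_le (orient p q) hwf
  rw [hw0] at ha0 hb0
  refine ⟨w, mem_openSegment_of_ne_left_right ?_ ?_ hwpq, hwf, a, ha, b, hb,
    ha0.lt_of_ne (hoff a ha), hb0.lt_of_ne (hoff b hb).symm⟩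
  · rintro rfl; exact hwS (hpq.2 p (by simp))
  · rintro rfl; exact hwS (hpq.2 q (by simp))

lemma exists_crossing_edge_of_notMem (hS : GenPos S) (hG : Maximal (IsPlaneGraph S) G)
    (hpq : IsEdgeOn S s(p, q)) (h : s(p, q) ∉ G) :
    ∃ f ∈ G, ∃ w ∈ openSegment ℝ p q, w ∈ segOf f ∧
      ∃ a ∈ f, ∃ b ∈ f, orient p q a < 0 ∧ 0 < orient p q b := by
  by_contra! hcross
  refine h (hG.le_of_ge (hG.prop.insert hpq fun f hf hne => ?_) (Finset.subset_insert _ _)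
    (Finset.mem_insert_self _ _))
  by_contra hnc
  obtain ⟨w, hw, hwf, a, ha, b, hb, ha0, hb0⟩ :=
    exists_orient_neg_pos_of_not_noCrossPair hS hpq (hG.prop.isEdgeOn f hf) hne hnc
  exact (hcross f hf w hw hwf a ha b hb ha0).not_gt hb0

end GeneralPosition

/-! ### Empty triangles in a triangulation -/

lemma exists_lineMap_eq_zero_of_mul_le {φ ψ : Pt →ᵃ[ℝ] ℝ} {v c : Pt} (hφ : 0 < φ v)
    (hc : φ c ≤ 0) (h : ψ v * φ c ≤ φ v * ψ c) :
    ∃ t ∈ Set.Ioc (0 : ℝ) 1,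
      φ (AffineMap.lineMap v c t) = 0 ∧ 0 ≤ ψ (AffineMap.lineMap v c t) := by
  have hden : 0 < φ v - φ c := by linarith
  refine ⟨φ v / (φ v - φ c), ⟨by positivity, (div_le_one hden).2 (by linarith)⟩, ?_⟩
  rw [apply_lineMap_real, apply_lineMap_real]
  refine ⟨by field_simp; ring, ?_⟩
  have hval : (1 - φ v / (φ v - φ c)) * ψ v + φ v / (φ v - φ c) * ψ c
      = (φ v * ψ c - ψ v * φ c) / (φ v - φ c) := by field_simp; ring
  rw [hval]
  exact div_nonneg (by linarith) hden.le

lemma exists_lineMap_exit {φ ψ : Pt →ᵃ[ℝ] ℝ} {v c : Pt} (hφ : 0 < φ v) (hψ : 0 < ψ v)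
    (h : ¬ (0 < φ c ∧ 0 < ψ c)) :
    ∃ t ∈ Set.Ioc (0 : ℝ) 1,
      (φ (AffineMap.lineMap v c t) = 0 ∧ 0 ≤ ψ (AffineMap.lineMap v c t)) ∨
      (ψ (AffineMap.lineMap v c t) = 0 ∧ 0 ≤ φ (AffineMap.lineMap v c t)) := by
  rcases le_total (ψ v * φ c) (φ v * ψ c) with hle | hle
  · have hc : φ c ≤ 0 := by
      by_contra! hpos
      exact h ⟨hpos, pos_of_mul_pos_right ((mul_pos hψ hpos).trans_le hle) hφ.le⟩
    obtain ⟨t, ht, hexit⟩ := exists_lineMap_eq_zero_of_mul_le hφ hc hle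
    exact ⟨t, ht, Or.inl hexit⟩
  · have hc : ψ c ≤ 0 := by
      by_contra! hpos
      exact h ⟨pos_of_mul_pos_right ((mul_pos hφ hpos).trans_le hle) hψ.le, hpos⟩
    obtain ⟨t, ht, hexit⟩ := exists_lineMap_eq_zero_of_mul_le hψ hc hle
    exact ⟨t, ht, Or.inr hexit⟩

lemma exists_forall_mul_le_mul {ι : Type*} {N : Finset ι} (hN : N.Nonempty) {f g : ι → ℝ}
    (hg : ∀ i ∈ N, 0 < g i) : ∃ i ∈ N, ∀ j ∈ N, f i * g j ≤ f j * g i := by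
  obtain ⟨i, hi, hmin⟩ := N.exists_min_image (fun i => f i / g i) hN
  exact ⟨i, hi, fun j hj => (div_le_div_iff₀ (hg i hi) (hg j hj)).1 (hmin j hj)⟩

section Visibility

variable {S : Finset Pt} {G : Finset (Sym2 Pt)} {x z w a p : Pt}

lemma exists_first_hit (hS : GenPos S) (hG : Maximal (IsPlaneGraph S) G)
    (hxz : IsEdgeOn S s(x, z)) (h : s(x, z) ∉ G) :
    ∃ k ∈ G, ∃ w ∈ openSegment ℝ x z, w ∈ segOf k ∧
      ∀ f ∈ G, Disjoint (segOf f) (openSegment ℝ x w) := by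
  let hits (k : Sym2 Pt) : Set ℝ := {t ∈ Set.Ioo 0 1 | AffineMap.lineMap x z t ∈ segOf k}
  have hinj : Function.Injective (AffineMap.lineMap x z : ℝ → Pt) :=
    AffineMap.lineMap_injective ℝ (isEdgeOn_mk.1 hxz).1
  have hline : ∀ t : ℝ, orient x z (AffineMap.lineMap x z t) = 0 := fun t => by simp
  have hsub : ∀ k ∈ G, (hits k).Subsingleton := by
    intro k hk t ht s hs
    by_contra hts
    exact h ((hG.prop.isEdgeOn k hk).eq_mk_of_orient_eq_zero hS hxz ht.2 hs.2 (hinj.ne hts)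
      (hline t) (hline s) ▸ hk)
  have hfin : (⋃ k ∈ G, hits k).Finite := G.finite_toSet.biUnion fun k hk => (hsub k hk).finite
  have hne : (⋃ k ∈ G, hits k).Nonempty := by
    obtain ⟨k, hk, w, hw, hwk, -⟩ := exists_crossing_edge_of_notMem hS hG hxz h
    rw [openSegment_eq_image_lineMap] at hw
    obtain ⟨t, ht, rfl⟩ := hw
    exact ⟨t, Set.mem_biUnion hk ⟨ht, hwk⟩⟩
  obtain ⟨t, ht, hmin⟩ := Set.exists_min_image _ id hfin hne
  obtain ⟨k, hk, ht01, htk⟩ := Set.mem_iUnion₂.1 ht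
  refine ⟨k, hk, _, openSegment_eq_image_lineMap ℝ x z ▸ Set.mem_image_of_mem _ ht01, htk,
    fun f hf => Set.disjoint_left.2 fun v hvf hv => ?_⟩
  rw [openSegment_eq_image_lineMap] at hv
  obtain ⟨s, ⟨hs0, hs1⟩, rfl⟩ := hv
  rw [AffineMap.lineMap_lineMap_right] at hvf
  have hst : s * t < t := mul_lt_of_lt_one_left ht01.1 hs1
  exact hst.not_ge
    (hmin _ (Set.mem_biUnion hf ⟨⟨mul_pos hs0 ht01.1, hst.trans ht01.2⟩, hvf⟩))

/-- Seen from `x`, no point of `S` in the triangle `xwa` comes before `p` when one turns from `w`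
towards `a`. The angles are compared through the ratio of the weights of `a` and `w`. -/
def IsFirstSeen (S : Finset Pt) (x w a p : Pt) : Prop :=
  p ∈ closedTriangle x w a ∧ ∀ q ∈ S, q ≠ x → q ∈ closedTriangle x w a →
    weight w a x q * weight a x w p ≤ weight a x w q * weight w a x p

lemma exists_isFirstSeen (hxwa : orient x w a ≠ 0) (ha : a ∈ S) :
    ∃ p ∈ S, p ≠ x ∧ IsFirstSeen S x w a p := by
  let N := S.filter fun q => q ≠ x ∧ q ∈ closedTriangle x w a
  have haN : a ∈ N := by
    have hax : a ≠ x := by rintro rfl; simp at hxwa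
    have haxw : orient a x w ≠ 0 := by rwa [orient_rotate]
    exact Finset.mem_filter.2 ⟨ha, hax, by simp, by simp, by simp [weight_apply_self haxw]⟩
  obtain ⟨p, hpN, hmin⟩ := exists_forall_mul_le_mul ⟨a, haN⟩ (f := weight a x w)
    (g := fun q => weight w a x q + weight a x w q) fun q hq => by
      obtain ⟨-, hqx, -, hqw, hqa⟩ := Finset.mem_filter.1 hq
      exact weight_add_weight_pos hxwa hqx hqw hqa
  obtain ⟨hpS, hpx, hp⟩ := Finset.mem_filter.1 hpN
  refine ⟨p, hpS, hpx, hp, fun q hqS hqx hq => ?_⟩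
  linarith [hmin q (Finset.mem_filter.2 ⟨hqS, hqx, hq⟩)]

lemma IsFirstSeen.mul_le_of_mem_side (hp : IsFirstSeen S x w a p) (hG : IsPlaneGraph S G)
    (hxwa : orient x w a ≠ 0) {k f : Sym2 Pt} (hk : k ∈ G) (hwk : w ∈ segOf k) (hak : a ∈ segOf k)
    (hclear : ∀ f ∈ G, Disjoint (segOf f) (openSegment ℝ x w)) (hf : f ∈ G) (hfk : f ≠ k)
    {u : Pt} (huf : u ∈ segOf f) (hu : u ∈ closedTriangle x w a)
    (hside : weight a x w u = 0 ∨ weight x w a u = 0) :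
    weight w a x u * weight a x w p ≤ weight a x w u * weight w a x p := by
  obtain ⟨hux, huw, hua⟩ := hu
  have of_mem_wa (hu0 : weight x w a u = 0) :
      weight w a x u * weight a x w p ≤ weight a x w u * weight w a x p := by
    have huk : u ∈ segOf k := (convex_segOf k).segment_subset hwk hak
      (mem_segment_of_weight_eq_zero hxwa hu0 huw hua)
    have huS : u ∈ S := (hG.isEdgeOn f hf).2 u (hG.mem_of_mem_segOf_inter hf hk hfk huf huk).1
    refine hp.2 u huS ?_ ⟨hux, huw, hua⟩
    rintro rfl
    simp [weight_apply_self hxwa] at hu0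
  rcases hside with hu0 | hu0
  · have haxw : orient a x w ≠ 0 := by rwa [orient_rotate]
    by_cases hu_eq_x : u = x
    · simp [hu_eq_x]
    by_cases hu_eq_w : u = w
    · exact of_mem_wa (by simp [hu_eq_w])
    · exact absurd (mem_openSegment_of_ne_left_right (Ne.symm hu_eq_x) (Ne.symm hu_eq_w)
        (mem_segment_of_weight_eq_zero haxw hu0 hux huw)) (Set.disjoint_left.1 (hclear f hf) huf)
  · exact of_mem_wa hu0

lemma IsFirstSeen.mul_le_of_crosses (hp : IsFirstSeen S x w a p) (hG : IsPlaneGraph S G)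
    (hxwa : orient x w a ≠ 0) {k f : Sym2 Pt} (hk : k ∈ G) (hwk : w ∈ segOf k) (hak : a ∈ segOf k)
    (hclear : ∀ f ∈ G, Disjoint (segOf f) (openSegment ℝ x w)) (hf : f ∈ G) {v : Pt}
    (hvf : v ∈ segOf f) (hvx : 0 < weight x w a v) (hva : 0 < weight a x w v)
    (hvp : weight w a x v * weight a x w p = weight a x w v * weight w a x p) {c : Pt}
    (hc : c ∈ f) : weight w a x c * weight a x w p ≤ weight a x w c * weight w a x p := by
  have hfk : f ≠ k := by
    rintro rfl
    have hwa : w ≠ a := by rintro rfl; simp at hxwa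
    exact hvx.ne' (apply_eq_zero_of_mem_segOf hwk hak hwa (by simp) (by simp) hvf)
  -- Otherwise follow `f` from `v` towards `c` up to the point `u` where it leaves the triangle
  -- `xwa`: this point is an endpoint of `f` on `wa` that is seen before `p`.
  by_contra! hlt
  have hpw := hp.1.2.1
  have hpa := hp.1.2.2
  have pos_of_lt : ∀ u, 0 ≤ weight a x w u →
      weight a x w u * weight w a x p < weight w a x u * weight a x w p → 0 < weight w a x u :=
    fun u hu h => pos_of_mul_pos_left ((mul_nonneg hu hpw).trans_lt h) hpa
  have hcout : ¬ (0 < weight a x w c ∧ 0 < weight x w a c) := by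
    rintro ⟨hca, hcx⟩
    have hcS : c ∈ S := (hG.isEdgeOn f hf).2 c hc
    have hc_ne_x : c ≠ x := by rintro rfl; simp at hca
    exact (hp.2 c hcS hc_ne_x ⟨hcx.le, (pos_of_lt c hca.le hlt).le, hca.le⟩).not_gt hlt
  obtain ⟨t, ⟨ht0, ht1⟩, hexit⟩ := exists_lineMap_exit hva hvx hcout
  set u : Pt := AffineMap.lineMap v c t with hudef
  have huf : u ∈ segOf f := (convex_segOf f).lineMap_mem hvf (mem_segOf_of_mem hc) ⟨ht0.le, ht1⟩
  have hult : weight a x w u * weight w a x p < weight w a x u * weight a x w p := by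
    rw [hudef, apply_lineMap_real, apply_lineMap_real]
    nlinarith
  obtain ⟨hux, hua, hside⟩ : 0 ≤ weight x w a u ∧ 0 ≤ weight a x w u ∧
      (weight a x w u = 0 ∨ weight x w a u = 0) := by
    rcases hexit with ⟨h0, h⟩ | ⟨h0, h⟩
    · exact ⟨h, h0.ge, Or.inl h0⟩
    · exact ⟨h0.ge, h, Or.inr h0⟩
  exact (hp.mul_le_of_mem_side hG hxwa hk hwk hak hclear hf hfk huf
    ⟨hux, (pos_of_lt u hua hult).le, hua⟩ hside).not_gt hult

lemma IsFirstSeen.mk_mem (hp : IsFirstSeen S x w a p) (hS : GenPos S)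
    (hG : Maximal (IsPlaneGraph S) G) (hxp : IsEdgeOn S s(x, p)) (hxwa : orient x w a ≠ 0)
    {k : Sym2 Pt} (hk : k ∈ G) (hwk : w ∈ segOf k) (hak : a ∈ segOf k)
    (hclear : ∀ f ∈ G, Disjoint (segOf f) (openSegment ℝ x w)) : s(x, p) ∈ G := by
  by_contra hxpG
  obtain ⟨f, hf, v, hv, hvf, c, hc, d, hd, hc0, hd0⟩ :=
    exists_crossing_edge_of_notMem hS hG hxp hxpG
  rw [openSegment_eq_image_lineMap] at hv
  obtain ⟨s, ⟨hs0, hs1⟩, rfl⟩ := hv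
  have hvx : 0 < weight x w a (AffineMap.lineMap x p s) := by
    rw [apply_lineMap_real, weight_apply_self hxwa]
    nlinarith [hp.1.1]
  have hvw : weight w a x (AffineMap.lineMap x p s) = s * weight w a x p := by
    rw [apply_lineMap_real, weight_apply_right]; ring
  have hva : weight a x w (AffineMap.lineMap x p s) = s * weight a x w p := by
    rw [apply_lineMap_real, weight_apply_middle]; ring
  have hpa : 0 < weight a x w p := by
    refine hp.1.2.2.lt_of_ne fun h0 => Set.disjoint_left.1 (hclear f hf) hvf ?_
    have haxw : orient a x w ≠ 0 := by rwa [orient_rotate]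
    have hpw : 0 < weight w a x p := by
      simpa [← h0] using weight_add_weight_pos hxwa (isEdgeOn_mk.1 hxp).1.symm hp.1.2.1 hp.1.2.2
    have hvw0 := hvw ▸ mul_pos hs0 hpw
    refine mem_openSegment_of_ne_left_right (fun h => ?_) (fun h => ?_)
      (mem_segment_of_weight_eq_zero haxw (by rw [hva, ← h0, mul_zero]) hvx.le hvw0.le)
    · rw [← h, weight_apply_right] at hvw0
      exact hvw0.false
    · rw [← h, weight_apply_middle] at hvx
      exact hvx.false
  have hsign : ∀ q ∈ f, 0 ≤ (orient x w a)⁻¹ * orient x p q := fun q hq => by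
    rw [← weight_mul_sub_weight_mul hxwa, sub_nonneg]
    exact hp.mul_le_of_crosses hG.prop hxwa hk hwk hak hclear hf hvf hvx
      (hva ▸ mul_pos hs0 hpa) (by rw [hvw, hva]; ring) hq
  rcases (inv_ne_zero hxwa).lt_or_gt with hD | hD
  · exact (hsign d hd).not_gt (mul_neg_of_neg_of_pos hD hd0)
  · exact (hsign c hc).not_gt (mul_neg_of_pos_of_neg hD hc0)

lemma orient_lineMap_ne_zero (hS : GenPos S) (hG : IsPlaneGraph S G) (hxz : IsEdgeOn S s(x, z))
    (h : s(x, z) ∉ G) {k : Sym2 Pt} (hk : k ∈ G) {t : ℝ} (ht : t ∈ Set.Ioo (0 : ℝ) 1)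
    (hw : AffineMap.lineMap x z t ∈ segOf k) (ha : a ∈ k) :
    orient x (AffineMap.lineMap x z t) a ≠ 0 := by
  obtain ⟨hne, hx, hz⟩ := isEdgeOn_mk.1 hxz
  have hscale : orient x (AffineMap.lineMap x z t) a = t * orient x z a := by
    rw [← orient_rotate a, apply_lineMap_real, orient_apply_right, orient_rotate a]; ring
  rw [hscale]
  refine mul_ne_zero ht.1.ne' fun hxza => ?_
  have haw : a ≠ AffineMap.lineMap x z t := by
    intro haw
    rcases hS.eq_or_eq hx hz ((hG.isEdgeOn k hk).2 a ha) hne hxza with rfl | rfl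
    · exact (AffineMap.lineMap_eq_left_iff.1 haw.symm).elim hne ht.1.ne'
    · exact (AffineMap.lineMap_eq_right_iff.1 haw.symm).elim hne ht.2.ne
  exact h ((hG.isEdgeOn k hk).eq_mk_of_orient_eq_zero hS hxz (mem_segOf_of_mem ha) hw haw hxza
    (by simp) ▸ hk)

lemma exists_adj_apply_lt (hS : GenPos S) (hG : Maximal (IsPlaneGraph S) G) (φ : Pt →ᵃ[ℝ] ℝ)
    (hx : x ∈ S) (hz : z ∈ S) (h : φ x < φ z) : ∃ p, s(x, p) ∈ G ∧ φ x < φ p := by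
  by_cases hxzG : s(x, z) ∈ G
  · exact ⟨z, hxzG, h⟩
  have hxz : IsEdgeOn S s(x, z) := isEdgeOn_mk.2 ⟨by rintro rfl; exact h.false, hx, hz⟩
  -- Walk from `x` towards `z` to the first blocking edge `k`, at `w`, and turn from there towards
  -- an endpoint `a` of `k` with `φ w ≤ φ a`. The first point seen on the way is a neighbour of `x`.
  obtain ⟨k, hk, w, hw, hwk, hclear⟩ := exists_first_hit hS hG hxz hxzG
  rw [openSegment_eq_image_lineMap] at hw
  obtain ⟨t, ⟨ht0, ht1⟩, rfl⟩ := hw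
  set w : Pt := AffineMap.lineMap x z t with hwdef
  have hxw : φ x < φ w := by rw [hwdef, apply_lineMap_real]; nlinarith
  obtain ⟨a, hak, hwa⟩ := exists_mem_apply_le φ hwk
  have haS : a ∈ S := (hG.prop.isEdgeOn k hk).2 a hak
  have hxwa : orient x w a ≠ 0 :=
    orient_lineMap_ne_zero hS hG.prop hxz hxzG hk ⟨ht0, ht1⟩ hwk hak
  obtain ⟨p, hpS, hpx, hp⟩ := exists_isFirstSeen hxwa haS
  refine ⟨p, hp.mk_mem hS hG (isEdgeOn_mk.2 ⟨hpx.symm, hx, hpS⟩) hxwa hk hwk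
    (mem_segOf_of_mem hak) hclear, ?_⟩
  have hsum := weight_add_weight_add_weight hxwa p
  have hpos := weight_add_weight_pos hxwa hpx hp.1.2.1 hp.1.2.2
  calc φ x < φ x + (weight w a x p + weight a x w p) * (φ w - φ x) :=
        lt_add_of_pos_right _ (mul_pos hpos (sub_pos.2 hxw))
    _ = weight x w a p * φ x + weight w a x p * φ w + weight a x w p * φ w := by
        linear_combination -φ x * hsum
    _ ≤ weight x w a p * φ x + weight w a x p * φ w + weight a x w p * φ a := by
        gcongr
        exact hp.1.2.2
    _ = φ p := (apply_eq_weight_mul_add hxwa φ p).symm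

end Visibility

section EmptyTriangle

variable {S : Finset Pt} {G : Finset (Sym2 Pt)} {x y z : Pt}

lemma exists_adj_orient_nonpos (hG : IsPlaneGraph S G)
    (h : ∃ p, s(x, p) ∈ G ∧ 0 < orient x y p) :
    ∃ z, s(x, z) ∈ G ∧ 0 < orient x y z ∧
      ∀ d, s(x, d) ∈ G → 0 < orient x y d → orient x d z ≤ 0 := by
  let N := S.filter fun p => s(x, p) ∈ G ∧ 0 < orient x y p
  have hmem : ∀ {p}, s(x, p) ∈ G → 0 < orient x y p → p ∈ N := fun hp hpos =>
    Finset.mem_filter.2 ⟨(isEdgeOn_mk.1 (hG.isEdgeOn _ hp)).2.2, hp, hpos⟩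
  obtain ⟨p, hp, hpos⟩ := h
  -- Neighbours left of `xy` are ordered by the cotangent of their angle with `xy`.
  let dot (d : Pt) : ℝ := (y.1 - x.1) * (d.1 - x.1) + (y.2 - x.2) * (d.2 - x.2)
  obtain ⟨z, hzN, hmin⟩ := exists_forall_mul_le_mul ⟨p, hmem hp hpos⟩ (f := fun d => -dot d)
    (g := orient x y) fun q hq => (Finset.mem_filter.1 hq).2.2
  obtain ⟨-, hz, hz0⟩ := Finset.mem_filter.1 hzN
  refine ⟨z, hz, hz0, fun d hd hd0 => ?_⟩
  have hxy : x ≠ y := ne_of_orient_ne_zero hz0.ne'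
  have hsq : 0 < (y.1 - x.1) ^ 2 + (y.2 - x.2) ^ 2 := by
    by_contra! hle
    exact hxy (Prod.ext (by nlinarith) (by nlinarith))
  have hid : -dot d * orient x y z - -dot z * orient x y d =
      -((y.1 - x.1) ^ 2 + (y.2 - x.2) ^ 2) * orient x d z := by
    simp only [dot, orient_apply]; ring
  nlinarith [hmin d (hmem hd hd0)]

lemma mem_or_weight_pos_of_mem_edge (hG : IsPlaneGraph S G) (hxyz : orient x y z ≠ 0)
    (hxy : s(x, y) ∈ G) (hxz : s(x, z) ∈ G) {k : Sym2 Pt} (hk : k ∈ G) {v c : Pt}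
    (hv : v ∈ segOf k) (hvx : 0 ≤ weight x y z v) (hvy : 0 < weight y z x v)
    (hvz : 0 < weight z x y v) (hc : c ∈ k) (hvc : weight x y z v ≤ weight x y z c)
    (hcx : 0 < weight x y z c) : x ∈ k ∨ c ∈ openTriangle x y z := by
  have hyzx : orient y z x ≠ 0 := by rwa [← orient_rotate]
  have hzxy : orient z x y ≠ 0 := by rwa [orient_rotate]
  by_contra! hcon
  obtain ⟨t, ⟨ht0, ht1⟩, hexit⟩ := exists_lineMap_exit hvy hvz fun h => hcon.2 ⟨hcx, h⟩
  set u : Pt := AffineMap.lineMap v c t with hudef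
  have huk : u ∈ segOf k := (convex_segOf k).lineMap_mem hv (mem_segOf_of_mem hc) ⟨ht0.le, ht1⟩
  have hux : 0 < weight x y z u := by rw [hudef, apply_lineMap_real]; nlinarith
  have mem_of_mem_side : ∀ {q}, s(x, q) ∈ G → k ≠ s(x, q) → weight x y z q = 0 →
      u ∈ segment ℝ x q → x ∈ k := by
    intro q hq hkq hq0 hu
    obtain ⟨huk', huq⟩ := hG.mem_of_mem_segOf_inter hk hq hkq huk hu
    rcases Sym2.mem_iff.1 huq with rfl | rfl
    · exact huk'
    · exact absurd hq0 hux.ne'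
  rcases hexit with ⟨h0, hnn⟩ | ⟨h0, hnn⟩
  · refine hcon.1 (mem_of_mem_side hxz ?_ (by simp)
      (segment_symm ℝ z x ▸ mem_segment_of_weight_eq_zero hyzx h0 hnn hux.le))
    rintro rfl
    exact hvy.ne' (apply_eq_zero_of_mem_segment (by simp) (by simp) hv)
  · refine hcon.1 (mem_of_mem_side hxy ?_ (by simp)
      (mem_segment_of_weight_eq_zero hzxy h0 hux.le hnn))
    rintro rfl
    exact hvz.ne' (apply_eq_zero_of_mem_segment (by simp) (by simp) hv)

lemma notMem_openTriangle_of_mem (hS : GenPos S) (hG : Maximal (IsPlaneGraph S) G)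
    (hxyz : orient x y z ≠ 0) (hxy : s(x, y) ∈ G) (hxz : s(x, z) ∈ G)
    (hcone : ∀ d, s(x, d) ∈ G → ¬ (0 < weight y z x d ∧ 0 < weight z x y d)) {q : Pt}
    (hq : q ∈ S) : q ∉ openTriangle x y z := by
  intro hqT
  obtain ⟨q, hqN, hmax⟩ := (S.filter (· ∈ openTriangle x y z)).exists_max_image (weight x y z)
    ⟨q, Finset.mem_filter.2 ⟨hq, hqT⟩⟩
  obtain ⟨hqS, hqx, hqy, hqz⟩ := Finset.mem_filter.1 hqN
  have hlt : weight x y z q < weight x y z x := by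
    linarith [weight_add_weight_add_weight hxyz q, weight_apply_self hxyz]
  obtain ⟨p, hqp, hp⟩ := exists_adj_apply_lt hS hG _ hqS
    (isEdgeOn_mk.1 (hG.prop.isEdgeOn _ hxy)).2.1 hlt
  rcases mem_or_weight_pos_of_mem_edge hG.prop hxyz hxy hxz hqp (left_mem_segment ℝ q p) hqx.le hqy
    hqz (Sym2.mem_mk_right q p) hp.le (hqx.trans hp) with hx | hpT
  · rcases Sym2.mem_iff.1 hx with rfl | rfl
    · simp at hqy
    · exact hcone q (Sym2.eq_swap ▸ hqp) ⟨hqy, hqz⟩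
  · have hpS := (isEdgeOn_mk.1 (hG.prop.isEdgeOn _ hqp)).2.2
    exact (hmax p (Finset.mem_filter.2 ⟨hpS, hpT⟩)).not_gt hp

lemma weight_nonpos_of_empty_cone (hS : GenPos S) (hG : Maximal (IsPlaneGraph S) G)
    (hxyz : orient x y z ≠ 0) (hxy : s(x, y) ∈ G) (hxz : s(x, z) ∈ G)
    (hcone : ∀ d, s(x, d) ∈ G → ¬ (0 < weight y z x d ∧ 0 < weight z x y d))
    {k : Sym2 Pt} (hk : k ∈ G) {v c : Pt} (hv : v ∈ segOf k) (hvx : 0 ≤ weight x y z v)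
    (hvy : 0 < weight y z x v) (hvz : 0 < weight z x y v) (hc : c ∈ k)
    (hvc : weight x y z v ≤ weight x y z c) : weight x y z c ≤ 0 := by
  by_contra! hcx
  rcases mem_or_weight_pos_of_mem_edge hG.prop hxyz hxy hxz hk hv hvx hvy hvz hc hvc hcx
    with ⟨d, rfl⟩ | hcT
  · rw [segOf_mk, segment_eq_image_lineMap] at hv
    obtain ⟨t, ⟨ht0, -⟩, rfl⟩ := hv
    rw [apply_lineMap_real, weight_apply_right, mul_zero, zero_add] at hvy
    rw [apply_lineMap_real, weight_apply_middle, mul_zero, zero_add] at hvz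
    exact hcone d hk ⟨pos_of_mul_pos_right hvy ht0, pos_of_mul_pos_right hvz ht0⟩
  · exact notMem_openTriangle_of_mem hS hG hxyz hxy hxz hcone
      ((hG.prop.isEdgeOn k hk).2 c hc) hcT

lemma mk_mem_of_empty_cone (hS : GenPos S) (hG : Maximal (IsPlaneGraph S) G)
    (hxyz : 0 < orient x y z) (hxy : s(x, y) ∈ G) (hxz : s(x, z) ∈ G)
    (hcone : ∀ d, s(x, d) ∈ G → ¬ (0 < weight y z x d ∧ 0 < weight z x y d)) : s(y, z) ∈ G := by
  have hyzx : orient y z x ≠ 0 := by rw [← orient_rotate]; exact hxyz.ne'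
  have hzxy : orient z x y ≠ 0 := by rw [orient_rotate]; exact hxyz.ne'
  by_contra hyzG
  have hyz : IsEdgeOn S s(y, z) := isEdgeOn_mk.2 ⟨ne_of_orient_ne_zero hyzx,
    (isEdgeOn_mk.1 (hG.prop.isEdgeOn _ hxy)).2.2, (isEdgeOn_mk.1 (hG.prop.isEdgeOn _ hxz)).2.2⟩
  obtain ⟨k, hk, v, hv, hvk, -, -, c, hc, -, hc0⟩ := exists_crossing_edge_of_notMem hS hG hyz hyzG
  have hcx : 0 < weight x y z c := by
    rw [weight_apply]; exact mul_pos (inv_pos.2 hxyz) hc0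
  rw [openSegment_eq_image_lineMap] at hv
  obtain ⟨t, ⟨ht0, ht1⟩, rfl⟩ := hv
  have hvx : weight x y z (AffineMap.lineMap y z t) = 0 := by simp
  have hvy : 0 < weight y z x (AffineMap.lineMap y z t) := by
    simp [apply_lineMap_real, -AffineMap.apply_lineMap, weight_apply_self hyzx, ht1]
  have hvz : 0 < weight z x y (AffineMap.lineMap y z t) := by
    simp [apply_lineMap_real, -AffineMap.apply_lineMap, weight_apply_self hzxy, ht0]
  exact (weight_nonpos_of_empty_cone hS hG hxyz.ne' hxy hxz hcone hk hvk hvx.ge hvy hvz hc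
    (hvx.trans_le hcx.le)).not_gt hcx

theorem exists_empty_triangle (hS : GenPos S) (hG : Maximal (IsPlaneGraph S) G)
    (hxy : s(x, y) ∈ G) (h : ∃ q ∈ S, 0 < orient x y q) :
    ∃ z, 0 < orient x y z ∧ s(x, z) ∈ G ∧ s(y, z) ∈ G ∧
      ∀ k ∈ G, Disjoint (segOf k) (openTriangle x y z) := by
  have hxS : x ∈ S := (isEdgeOn_mk.1 (hG.prop.isEdgeOn _ hxy)).2.1
  obtain ⟨q, hqS, hq⟩ := h
  obtain ⟨p, hxp, hp⟩ := exists_adj_apply_lt hS hG (orient x y) hxS hqS (by simpa using hq)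
  obtain ⟨z, hxz, hz, hfirst⟩ := exists_adj_orient_nonpos hG.prop ⟨p, hxp, by simpa using hp⟩
  have hcone : ∀ d, s(x, d) ∈ G → ¬ (0 < weight y z x d ∧ 0 < weight z x y d) := by
    rintro d hd ⟨hdy, hdz⟩
    rw [weight_apply, ← orient_rotate x, orient_rotate z, mul_pos_iff_of_pos_left (inv_pos.2 hz)]
      at hdy
    rw [weight_apply, orient_rotate z, mul_pos_iff_of_pos_left (inv_pos.2 hz)] at hdz
    exact (hfirst d hd hdz).not_gt hdy
  refine ⟨z, hz, hxz, mk_mem_of_empty_cone hS hG hz hxy hxz hcone,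
    fun k hk => Set.disjoint_left.2 fun v hv ⟨hvx, hvy, hvz⟩ => ?_⟩
  obtain ⟨c, hc, hvc⟩ := exists_mem_apply_le (weight x y z) hv
  exact (weight_nonpos_of_empty_cone hS hG hz.ne' hxy hxz hcone hk hv hvx.le hvy hvz hc hvc).not_gt
    (hvx.trans_le hvc)

end EmptyTriangle

/-! ### Connected edge sets -/

/-- `EdgeReach E a b` says that `E` contains a path from `a` to `b`. -/
abbrev EdgeReach {α : Type*} (E : Finset (Sym2 α)) : α → α → Prop :=
  Relation.ReflTransGen fun a b => s(a, b) ∈ E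

section EdgeReach

variable {α : Type*} {E E' : Finset (Sym2 α)} {a b x y z : α}

lemma EdgeReach.symm (h : EdgeReach E a b) : EdgeReach E b a := by
  have : Std.Symm fun a b : α => s(a, b) ∈ E := ⟨fun _ _ h => Sym2.eq_swap ▸ h⟩
  exact Std.Symm.symm _ _ h

lemma EdgeReach.mono (hE : E ⊆ E') (h : EdgeReach E a b) : EdgeReach E' a b :=
  Relation.ReflTransGen.mono (fun _ _ h => hE h) _ _ h

lemma EdgeReach.erase [DecidableEq α] (h : EdgeReach E a x) (y : α) :
    EdgeReach (E.erase s(x, y)) a x ∨ EdgeReach (E.erase s(x, y)) a y := by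
  induction h using Relation.ReflTransGen.head_induction_on with
  | refl => exact .inl .refl
  | @head a b hab _ ih =>
    by_cases heq : s(a, b) = s(x, y)
    · rcases Sym2.mem_iff.1 (heq ▸ Sym2.mem_mk_left a b) with rfl | rfl
      · exact .inl .refl
      · exact .inr .refl
    · have hmem : s(a, b) ∈ E.erase s(x, y) := Finset.mem_erase.2 ⟨heq, hab⟩
      exact ih.imp (.head hmem) (.head hmem)

lemma EdgeReach.exchange [DecidableEq α] (h : EdgeReach E a x)
    (hzy : EdgeReach (E.erase s(x, y)) z y) :
    EdgeReach (insert s(x, z) (E.erase s(x, y))) a x := by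
  have hsub := Finset.subset_insert s(x, z) (E.erase s(x, y))
  rcases h.erase y with hax | hay
  · exact hax.mono hsub
  · refine (EdgeReach.mono hsub (hay.trans hzy.symm)).tail ?_
    rw [Sym2.eq_swap]
    exact Finset.mem_insert_self _ _

lemma card_le_card_edges_add_one {S : Finset α} (hS : S.Nonempty) (hE : ∀ e ∈ E, ∀ p ∈ e, p ∈ S)
    (h : ∀ p ∈ S, ∀ q ∈ S, EdgeReach E p q) : S.card ≤ E.card + 1 := by
  let H : SimpleGraph S := (SimpleGraph.fromEdgeSet (E : Set (Sym2 α))).comap Subtype.val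
  have hreach : ∀ {p q}, EdgeReach E p q → ∀ (hp : p ∈ S) (hq : q ∈ S),
      H.Reachable ⟨p, hp⟩ ⟨q, hq⟩ := by
    intro p q hpq
    induction hpq with
    | refl => exact fun _ _ => .rfl
    | @tail b c _ hbc ih =>
      intro hp hc
      refine (ih hp (hE _ hbc b (by simp))).trans ?_
      by_cases heq : b = c
      · subst heq; exact .rfl
      · exact SimpleGraph.Adj.reachable (by simpa [H] using ⟨hbc, heq⟩)
  have : Nonempty S := hS.to_subtype
  have hconn : H.Connected := ⟨fun p q => hreach (h _ p.2 _ q.2) p.2 q.2⟩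
  have hedges : ∀ e ∈ H.edgeSet, Sym2.map Subtype.val e ∈ E := by
    intro e he
    induction e with | _ p q => simp_all [H]
  have hcard : Nat.card H.edgeSet ≤ E.card := by
    have hinj : Function.Injective
        fun e : H.edgeSet => (⟨Sym2.map Subtype.val e.1, hedges e e.2⟩ : E) := fun e f hef =>
      Subtype.ext (Sym2.map.injective Subtype.val_injective (congrArg Subtype.val hef))
    simpa using Nat.card_le_card_of_injective _ hinj
  simpa using hconn.card_vert_le_card_edgeSet_add_one.trans (Nat.add_le_add_right hcard 1)

end EdgeReach

/-! ### Spanning trees and rotations -/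

section Rotation

variable {S : Finset Pt} {E E' G T : Finset (Sym2 Pt)} {x y z : Pt}

lemma IsPST.isPlaneGraph (h : IsPST S E) : IsPlaneGraph S E := ⟨h.1, h.2.1⟩

lemma IsPST.card_add_one (h : IsPST S E) : E.card + 1 = S.card := h.2.2.1

lemma IsPST.edgeReach (h : IsPST S E) {p q : Pt} (hp : p ∈ S) (hq : q ∈ S) : EdgeReach E p q :=
  h.2.2.2 p hp q hq

lemma IsPST.exchange (hT : IsPST S T) (hxy : s(x, y) ∈ T)
    (hplane : IsPlaneGraph S (insert s(x, z) (T.erase s(x, y))))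
    (hzy : EdgeReach (T.erase s(x, y)) z y) :
    s(x, z) ∉ T.erase s(x, y) ∧ IsPST S (insert s(x, z) (T.erase s(x, y))) := by
  have hx : x ∈ S := (hT.isPlaneGraph.isEdgeOn _ hxy).2 x (by simp)
  have hreach : ∀ p ∈ S, EdgeReach (insert s(x, z) (T.erase s(x, y))) p x := fun p hp =>
    (hT.edgeReach hp hx).exchange hzy
  have hconn : ∀ p ∈ S, ∀ q ∈ S, EdgeReach (insert s(x, z) (T.erase s(x, y))) p q :=
    fun p hp q hq => (hreach p hp).trans (hreach q hq).symm
  have hcard := card_le_card_edges_add_one ⟨x, hx⟩ (fun e he => (hplane.isEdgeOn e he).2) hconn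
  have herase := Finset.card_erase_add_one hxy
  have hT_card := hT.card_add_one
  have hnew : s(x, z) ∉ T.erase s(x, y) := fun hmem => by
    rw [Finset.insert_eq_of_mem hmem] at hcard
    omega
  refine ⟨hnew, hplane.isEdgeOn, hplane.noCross, ?_, hconn⟩
  rw [Finset.card_insert_of_notMem hnew]
  omega

namespace SimEmptyTriRot

lemma refl (h : IsPST S E) : SimEmptyTriRot S E E :=
  ⟨h, h, id, by simp [Set.BijOn, Set.MapsTo, Set.InjOn, Set.SurjOn], by simp⟩

lemma symm (h : SimEmptyTriRot S E E') : SimEmptyTriRot S E' E := by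
  obtain ⟨hE, hE', π, hπ, hempty⟩ := h
  have hinv := hπ.invOn_invFunOn.symm
  refine ⟨hE', hE, Function.invFunOn π ↑(E \ E'), hπ.symm hinv, fun e he => ?_⟩
  obtain ⟨p, q, r, hpq, hpr, hdisj⟩ := hempty _ ((hπ.symm hinv).mapsTo he)
  refine ⟨p, r, q, by rw [← hpr, hinv.1 he], hpq, fun g hg => ?_⟩
  rw [triInt_swap, triInt_rotate]
  exact hdisj g (Finset.union_comm E' E ▸ hg)

lemma of_exchange (hG : IsPlaneGraph S G) (hT : IsPST S T) (hTG : T ⊆ G) (hxy : s(x, y) ∈ T)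
    (hxz : s(x, z) ∈ G) (hyz : y ≠ z) (hzy : EdgeReach (T.erase s(x, y)) z y)
    (hempty : ∀ g ∈ G, Disjoint (segOf g) (triInt x y z)) :
    SimEmptyTriRot S T (insert s(x, z) (T.erase s(x, y))) := by
  have hsub : insert s(x, z) (T.erase s(x, y)) ⊆ G :=
    Finset.insert_subset hxz ((Finset.erase_subset _ _).trans hTG)
  obtain ⟨hnew, hT'⟩ := hT.exchange hxy (hG.subset hsub) hzy
  have hne : s(x, z) ≠ s(x, y) := fun h => hyz (Sym2.congr_right.1 h).symm
  have hold : T \ insert s(x, z) (T.erase s(x, y)) = {s(x, y)} := by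
    ext k; simp only [Finset.mem_sdiff, Finset.mem_insert, Finset.mem_erase]; grind
  have hadd : insert s(x, z) (T.erase s(x, y)) \ T = {s(x, z)} := by
    ext k; simp only [Finset.mem_sdiff, Finset.mem_insert, Finset.mem_erase]; grind
  refine ⟨hT, hT', fun _ => s(x, z), by rw [hold, hadd]; simp, fun e he => ?_⟩
  rw [hold, Finset.mem_singleton] at he
  exact ⟨x, y, z, he, rfl, fun g hg => hempty g (Finset.union_subset hTG hsub hg)⟩

lemma exists_of_empty_triangle (hG : IsPlaneGraph S G) (hT : IsPST S T) (hTG : T ⊆ G)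
    (hxy : s(x, y) ∈ T) (hxz : s(x, z) ∈ G) (hyz : s(y, z) ∈ G)
    (hempty : ∀ g ∈ G, Disjoint (segOf g) (triInt x y z)) :
    ∃ f, (f = s(x, z) ∨ f = s(y, z)) ∧ SimEmptyTriRot S T (insert f (T.erase s(x, y))) := by
  obtain ⟨hne_yz, -, hz⟩ := isEdgeOn_mk.1 (hG.isEdgeOn _ hyz)
  obtain ⟨hne_xz, hx, -⟩ := isEdgeOn_mk.1 (hG.isEdgeOn _ hxz)
  -- Removing `xy` separates `x` from `y`; reconnect `z` to whichever of the two it has lost.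
  rcases (hT.edgeReach hz hx).erase y with hzx | hzy
  · refine ⟨s(y, z), .inr rfl, ?_⟩
    rw [Sym2.eq_swap (a := x)] at hxy hzx ⊢
    exact of_exchange hG hT hTG hxy hyz hne_xz hzx (triInt_swap x y z ▸ hempty)
  · exact ⟨s(x, z), .inl rfl, of_exchange hG hT hTG hxy hxz hne_yz hzy hempty⟩

end SimEmptyTriRot

end Rotation

/-! ### Sequences of steps -/

namespace ReachesIn

variable {α β γ : Type*} {step : α → α → Prop} {step' : β → β → Prop} {step'' : γ → γ → Prop}
  {m n : ℕ} {x y z : α}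

lemma refl (step : α → α → Prop) (m : ℕ) (x : α) : ReachesIn step m x x :=
  ⟨0, m.zero_le, fun _ => x, rfl, rfl, by simp⟩

lemma mono (hmn : m ≤ n) (h : ReachesIn step m x y) : ReachesIn step n x y := by
  obtain ⟨k, hk, f⟩ := h
  exact ⟨k, hk.trans hmn, f⟩

lemma head (hxy : step x y) (h : ReachesIn step m y z) : ReachesIn step (m + 1) x z := by
  obtain ⟨k, hk, f, rfl, rfl, hf⟩ := h
  refine ⟨k + 1, by omega, fun i => i.casesOn x f, rfl, rfl, fun i hi => ?_⟩
  cases i with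
  | zero => exact hxy
  | succ i => exact hf i (by omega)

lemma trans (hxy : ReachesIn step m x y) (hyz : ReachesIn step n y z) :
    ReachesIn step (m + n) x z := by
  obtain ⟨k, hk, f, rfl, rfl, hf⟩ := hxy
  refine mono (Nat.add_le_add_right hk n) ?_
  clear hk
  induction k generalizing f with
  | zero => simpa using hyz
  | succ k ih =>
    have htail : ReachesIn step (k + n) (f 1) z :=
      ih (fun i => f (i + 1)) (fun i hi => hf (i + 1) (by omega)) hyz
    rw [Nat.succ_add_eq_add_succ]
    exact htail.head (hf 0 (by omega))

lemma symm (hstep : ∀ a b, step a b → step b a) (h : ReachesIn step m x y) :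
    ReachesIn step m y x := by
  obtain ⟨k, hk, f, rfl, rfl, hf⟩ := h
  refine ⟨k, hk, fun i => f (k - i), by simp, by simp, fun i hi => hstep _ _ ?_⟩
  have hprev := hf (k - (i + 1)) (by omega)
  rwa [show k - (i + 1) + 1 = k - i by omega] at hprev

lemma exists_seq (hy : step y y) (h : ReachesIn step m x y) :
    ∃ f : ℕ → α, f 0 = x ∧ f m = y ∧ ∀ i < m, step (f i) (f (i + 1)) := by
  obtain ⟨k, hk, f, rfl, rfl, hf⟩ := h
  refine ⟨fun i => f (min i k), by simp, by simp [hk], fun i _ => ?_⟩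
  rcases lt_or_ge i k with hik | hki
  · simpa [hik.le, Nat.succ_le_of_lt hik] using hf i hik
  · simpa [hki, hki.trans i.le_succ] using hy

lemma map₂ (op : α → β → γ)
    (hop : ∀ {a a' b b'}, step a a' → step' b b' → step'' (op a b) (op a' b')) {a b : β}
    (hy : step y y) (hb : step' b b) (hxy : ReachesIn step m x y) (hab : ReachesIn step' m a b) :
    ReachesIn step'' m (op x a) (op y b) := by
  obtain ⟨f, rfl, rfl, hf⟩ := hxy.exists_seq hy
  obtain ⟨g, rfl, rfl, hg⟩ := hab.exists_seq hb
  exact ⟨m, le_rfl, fun i => op (f i) (g i), rfl, rfl, fun i hi => hop (hf i hi) (hg i hi)⟩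

end ReachesIn

/-! ### Edges crossing a line -/

/-- `e` has endpoints strictly on both sides of the line `φ = 0`. -/
def Crosses (φ : Pt →ᵃ[ℝ] ℝ) (e : Sym2 Pt) : Prop := ∃ p ∈ e, ∃ q ∈ e, φ p < 0 ∧ 0 < φ q

lemma crosses_mk {φ : Pt →ᵃ[ℝ] ℝ} {p q : Pt} : Crosses φ s(p, q) ↔ φ p * φ q < 0 := by
  simp only [Crosses, Sym2.mem_iff, exists_eq_or_imp, exists_eq_left, mul_neg_iff]
  constructor
  · rintro ((h | h) | (h | h)) <;> first | tauto | exact absurd h.1 h.2.not_gt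
  · tauto

lemma Crosses.apply_ne_zero {φ : Pt →ᵃ[ℝ] ℝ} {e : Sym2 Pt} (he : Crosses φ e) {p : Pt}
    (hp : p ∈ e) : φ p ≠ 0 := by
  obtain ⟨q, rfl⟩ := hp
  exact left_ne_zero_of_mul (crosses_mk.1 he).ne

lemma Crosses.exists_mem_segOf_apply_eq_zero {φ : Pt →ᵃ[ℝ] ℝ} {e : Sym2 Pt} (he : Crosses φ e) :
    ∃ w ∈ segOf e, φ w = 0 := by
  obtain ⟨p, hp, q, hq, hp0, hq0⟩ := he
  have hmem : (0 : ℝ) ∈ segment ℝ (φ p) (φ q) := by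
    rw [segment_eq_Icc (hp0.trans hq0).le]
    exact ⟨hp0.le, hq0.le⟩
  rw [← image_segment ℝ φ] at hmem
  obtain ⟨w, hw, hw0⟩ := hmem
  exact ⟨w, (convex_segOf e).segment_subset (mem_segOf_of_mem hp) (mem_segOf_of_mem hq) hw, hw0⟩

lemma mul_pos_of_crosses {φ : Pt →ᵃ[ℝ] ℝ} {x y z : Pt} (hxy : Crosses φ s(x, y))
    (hyz : Crosses φ s(y, z)) : 0 < φ x * φ z := by
  rw [crosses_mk] at hxy hyz
  have hy : 0 < φ y ^ 2 := pow_two_pos_of_ne_zero (left_ne_zero_of_mul hyz.ne)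
  exact pos_of_mul_pos_left (by linarith [mul_pos_of_neg_of_neg hxy hyz] :
    0 < φ x * φ z * φ y ^ 2) hy.le

lemma sub_ne_zero_of_crosses {φ : Pt →ᵃ[ℝ] ℝ} {x y : Pt} (hxy : Crosses φ s(x, y)) :
    φ y - φ x ≠ 0 := by
  intro h
  rw [crosses_mk, sub_eq_zero.1 h] at hxy
  exact hxy.not_ge (mul_self_nonneg _)

/-- An affine function vanishing exactly on the line `p.1 + L.1 * p.2 = L.2`. On such a line,
`p.2` is a coordinate. -/
def offset (L : ℝ × ℝ) : Pt →ᵃ[ℝ] ℝ :=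
  (LinearMap.fst ℝ ℝ ℝ + L.1 • LinearMap.snd ℝ ℝ ℝ).toAffineMap - AffineMap.const ℝ Pt L.2

lemma offset_apply (L : ℝ × ℝ) (p : Pt) : offset L p = p.1 + L.1 * p.2 - L.2 := by
  simp [offset]

lemma eq_of_offset_eq {L : ℝ × ℝ} {p q : Pt} (h : offset L p = offset L q) (h₂ : p.2 = q.2) :
    p = q := by
  rw [offset_apply, offset_apply, h₂] at h
  exact Prod.ext (by linarith) h₂

lemma orient_eq_offset (L : ℝ × ℝ) (p q r : Pt) : orient p q r =
    (offset L q - offset L p) * (r.2 - p.2) - (q.2 - p.2) * (offset L r - offset L p) := by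
  simp only [orient_apply, offset_apply]; ring

/-- The second coordinate of the point where the line through the edge `e` meets the line
`offset L = 0`; the junk value for parallel lines is `0`. -/
def height (L : ℝ × ℝ) (e : Sym2 Pt) : ℝ :=
  Sym2.lift ⟨fun x y => (x.2 * offset L y - y.2 * offset L x) / (offset L y - offset L x),
    fun x y => by beta_reduce; rw [← neg_div_neg_eq]; congr 1 <;> ring⟩ e

/-- An affine function that is positive above the line through the edge `e`, negative below it,
where the direction of the line `offset L = 0` is vertical. -/
def elevation (L : ℝ × ℝ) (e : Sym2 Pt) : Pt →ᵃ[ℝ] ℝ :=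
  Sym2.lift ⟨fun x y => (offset L y - offset L x) • orient x y, fun x y => by
    ext p
    simp only [AffineMap.coe_smul, Pi.smul_apply, smul_eq_mul]
    rw [orient_swap]; ring⟩ e

section Height

variable {L : ℝ × ℝ} {e f : Sym2 Pt} {v w x y z : Pt}

lemma elevation_mk (L : ℝ × ℝ) (x y p : Pt) :
    elevation L s(x, y) p = (offset L y - offset L x) * orient x y p := rfl

lemma elevation_eq_zero_of_mem_segOf (hw : w ∈ segOf e) : elevation L e w = 0 := by
  induction e with | _ x y =>
  rw [elevation_mk, orient_eq_zero_of_mem_segment hw, mul_zero]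

lemma Crosses.exists_elevation_eq_mul (he : Crosses (offset L) e) :
    ∃ c > 0, ∀ w, offset L w = 0 → elevation L e w = c * (w.2 - height L e) := by
  induction e with | _ x y =>
  have hxy := sub_ne_zero_of_crosses he
  refine ⟨(offset L y - offset L x) ^ 2, by positivity, fun w hw => ?_⟩
  have hheight : height L s(x, y) =
    (x.2 * offset L y - y.2 * offset L x) / (offset L y - offset L x) := rfl
  rw [elevation_mk, orient_eq_offset L, hheight, hw]
  field_simp
  ring

lemma Crosses.elevation_pos_iff (he : Crosses (offset L) e) (hw : offset L w = 0) :
    0 < elevation L e w ↔ height L e < w.2 := by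
  obtain ⟨c, hc, h⟩ := he.exists_elevation_eq_mul
  rw [h w hw, mul_pos_iff_of_pos_left hc, sub_pos]

lemma Crosses.elevation_neg_iff (he : Crosses (offset L) e) (hw : offset L w = 0) :
    elevation L e w < 0 ↔ w.2 < height L e := by
  obtain ⟨c, hc, h⟩ := he.exists_elevation_eq_mul
  rw [h w hw, ← neg_pos, ← mul_neg, mul_pos_iff_of_pos_left hc, neg_pos, sub_neg]

lemma Crosses.exists_mem_segOf_snd_eq_height (he : Crosses (offset L) e) :
    ∃ w ∈ segOf e, offset L w = 0 ∧ w.2 = height L e := by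
  obtain ⟨w, hw, hw0⟩ := he.exists_mem_segOf_apply_eq_zero
  have h0 : elevation L e w = 0 := elevation_eq_zero_of_mem_segOf hw
  exact ⟨w, hw, hw0, le_antisymm (not_lt.1 fun h => ((he.elevation_pos_iff hw0).2 h).ne' h0)
    (not_lt.1 fun h => ((he.elevation_neg_iff hw0).2 h).ne h0)⟩

lemma height_ne_of_noCrossPair (he : Crosses (offset L) e) (hf : Crosses (offset L) f)
    (hef : NoCrossPair e f) : height L e ≠ height L f := by
  intro h
  obtain ⟨v, hv, hv0, hv2⟩ := he.exists_mem_segOf_snd_eq_height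
  obtain ⟨w, hw, hw0, hw2⟩ := hf.exists_mem_segOf_snd_eq_height
  obtain rfl : v = w := eq_of_offset_eq (hv0.trans hw0.symm) (hv2.trans (h.trans hw2.symm))
  exact he.apply_ne_zero (hef ⟨hv, hw⟩).1 hv0

lemma height_lt_of_elevation_neg (hxy : Crosses (offset L) s(x, y))
    (hyz : Crosses (offset L) s(y, z)) (hz : elevation L s(x, y) z < 0) :
    height L s(y, z) < height L s(x, y) := by
  obtain ⟨w, hw, hw0, hw2⟩ := hyz.exists_mem_segOf_snd_eq_height
  rw [← hw2, ← hxy.elevation_neg_iff hw0]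
  rw [segOf_mk, segment_eq_image_lineMap] at hw
  obtain ⟨t, ⟨ht0, -⟩, rfl⟩ := hw
  have ht : t ≠ 0 := by
    rintro rfl
    rw [AffineMap.lineMap_apply_zero] at hw0
    exact hyz.apply_ne_zero (by simp) hw0
  have hy : elevation L s(x, y) y = 0 := elevation_eq_zero_of_mem_segOf (right_mem_segment ℝ x y)
  rw [apply_lineMap_real, hy, mul_zero, zero_add]
  exact mul_neg_of_pos_of_neg (ht0.lt_of_ne' ht) hz

lemma mem_segOf_of_elevation_eq_zero (hxy : Crosses (offset L) s(x, y))
    (h0 : elevation L s(x, y) w = 0) (hwx : 0 ≤ offset L w * offset L x)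
    (hle : |offset L w| ≤ |offset L x|) : w ∈ segOf s(x, y) := by
  have hmem : offset L w ∈ segment ℝ (offset L x) (offset L y) := by
    rw [segment_eq_uIcc, Set.mem_uIcc]
    rcases mul_neg_iff.1 (crosses_mk.1 hxy) with ⟨hx, hy⟩ | ⟨hx, hy⟩
    · have hw : 0 ≤ offset L w := nonneg_of_mul_nonneg_left hwx hx
      rw [abs_of_nonneg hw, abs_of_pos hx] at hle
      exact .inr ⟨hy.le.trans hw, hle⟩
    · have hw : offset L w ≤ 0 := nonpos_of_mul_nonneg_left hwx hx
      rw [abs_of_nonpos hw, abs_of_neg hx] at hle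
      exact .inl ⟨by linarith, hw.trans hy.le⟩
  rw [segment_eq_image_lineMap] at hmem
  obtain ⟨t, ht, htw⟩ := hmem
  rw [segOf_mk, segment_eq_image_lineMap]
  refine ⟨t, ht, ?_⟩
  have hoff : offset L (AffineMap.lineMap x y t) = offset L w := by
    rw [AffineMap.apply_lineMap, htw]
  have hd := sub_ne_zero_of_crosses hxy
  have horient := (mul_eq_zero.1 h0).resolve_left hd
  refine eq_of_offset_eq hoff ?_
  rw [orient_eq_offset L, ← hoff, apply_lineMap_real] at horient
  apply mul_left_cancel₀ hd
  simp only [AffineMap.lineMap_apply_module', Prod.snd_add, Prod.smul_snd, Prod.snd_sub,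
    smul_eq_mul]
  linarith

lemma mul_elevation_pos (he : Crosses (offset L) e) (hf : Crosses (offset L) f)
    (hef : NoCrossPair f e) (hv : v ∈ e) (hx : x ∈ f)
    (hvf : v ∉ f) (hvx : 0 < offset L v * offset L x) (hle : |offset L v| ≤ |offset L x|) :
    0 < (height L e - height L f) * elevation L f v := by
  obtain ⟨w, hwe, hw0, hw2⟩ := he.exists_mem_segOf_snd_eq_height
  obtain ⟨c, hc, hlin⟩ := hf.exists_elevation_eq_mul
  obtain ⟨u, rfl⟩ := hv
  obtain ⟨y, rfl⟩ := hx
  -- The part of `e` between `v` and the line `offset L = 0` cannot pass from one side of `f` to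
  -- the other.
  by_contra! hneg
  have hmem : (0 : ℝ) ∈ segment ℝ (elevation L s(x, y) w) (elevation L s(x, y) v) := by
    have hmul : elevation L s(x, y) w * elevation L s(x, y) v ≤ 0 := by
      rw [hlin w hw0, hw2, mul_assoc]
      exact mul_nonpos_of_nonneg_of_nonpos hc.le hneg
    rw [segment_eq_uIcc, Set.mem_uIcc]
    exact (mul_nonpos_iff.1 hmul).symm.imp id And.symm
  rw [← image_segment ℝ (elevation L s(x, y)), segment_eq_image_lineMap] at hmem
  obtain ⟨_, ⟨t, ⟨ht0, ht1⟩, rfl⟩, hp0⟩ := hmem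
  set p := AffineMap.lineMap w v t with hp
  have hpoff : offset L p = t * offset L v := by rw [hp, apply_lineMap_real, hw0]; ring
  have hpe : p ∈ segOf s(v, u) := (convex_segOf _).segment_subset hwe
    (left_mem_segment ℝ v u) (segment_eq_image_lineMap ℝ w v ▸ ⟨t, ⟨ht0, ht1⟩, rfl⟩)
  have hpf : p ∈ segOf s(x, y) := by
    refine mem_segOf_of_elevation_eq_zero hf hp0 ?_ (le_trans ?_ hle)
    · rw [hpoff, mul_assoc]; positivity
    · rw [hpoff, abs_mul, abs_of_nonneg ht0]
      exact mul_le_of_le_one_left (abs_nonneg _) ht1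
  obtain ⟨hpf_mem, hpe_mem⟩ := hef ⟨hpf, hpe⟩
  rcases Sym2.mem_iff.1 hpe_mem with hpv | hpu
  · exact hvf (hpv ▸ hpf_mem)
  · rw [crosses_mk, ← hpu, hpoff, mul_left_comm] at he
    exact he.not_ge (mul_nonneg ht0 (mul_self_nonneg _))

end Height

section CrossingEdges

variable {L : ℝ × ℝ} {S : Finset Pt} {G T : Finset (Sym2 Pt)} {e f e₁ e₂ e₃ e₄ : Sym2 Pt}
  {p w x y z : Pt}

lemma Crosses.mul_neg_of_mem {φ : Pt →ᵃ[ℝ] ℝ} (he : Crosses φ e) (hx : x ∈ e) (hz : z ∈ e)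
    (hxz : x ≠ z) : φ x * φ z < 0 := by
  rw [(Sym2.mem_and_mem_iff hxz).1 ⟨hx, hz⟩, crosses_mk] at he
  exact he

/-- The edges of `G` crossing the line `offset L = 0`. -/
def crossingEdges (L : ℝ × ℝ) (G : Finset (Sym2 Pt)) : Finset (Sym2 Pt) :=
  G.filter (Crosses (offset L))

lemma mem_crossingEdges : e ∈ crossingEdges L G ↔ e ∈ G ∧ Crosses (offset L) e :=
  Finset.mem_filter

lemma IsPlaneGraph.height_injOn (hG : IsPlaneGraph S G) :
    Set.InjOn (height L) (crossingEdges L G) := by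
  intro e he f hf h
  obtain ⟨heG, hec⟩ := mem_crossingEdges.1 he
  obtain ⟨hfG, hfc⟩ := mem_crossingEdges.1 hf
  by_contra hef
  exact height_ne_of_noCrossPair hec hfc (hG.noCross e heG f hfG hef) h

lemma IsPlaneGraph.not_interleaved (hG : IsPlaneGraph S G) (h₁ : e₁ ∈ crossingEdges L G)
    (h₂ : e₂ ∈ crossingEdges L G) (h₃ : e₃ ∈ crossingEdges L G) (h₄ : e₄ ∈ crossingEdges L G)
    (hx₁ : x ∈ e₁) (hz₂ : z ∈ e₂) (hx₃ : x ∈ e₃) (hz₄ : z ∈ e₄) (hxz : x ≠ z)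
    (hside : 0 < offset L x * offset L z) (h₁₂ : height L e₁ < height L e₂)
    (h₂₃ : height L e₂ < height L e₃) (h₃₄ : height L e₃ < height L e₄) : False := by
  rw [mem_crossingEdges] at h₁ h₂ h₃ h₄
  have hnc : ∀ {e f}, e ∈ G → f ∈ G → height L e ≠ height L f → NoCrossPair e f :=
    fun he hf hne => hG.noCross _ he _ hf fun h => hne (congrArg _ h)
  -- The closer of `x` and `z` to the line would be both above and below an edge at the other.
  rcases le_total |offset L z| |offset L x| with hle | hle
  · have hz₃ : z ∉ e₃ := fun hz => (h₃.2.mul_neg_of_mem hx₃ hz hxz).not_gt hside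
    rw [mul_comm] at hside
    have hbelow := mul_elevation_pos h₂.2 h₃.2 (hnc h₃.1 h₂.1 h₂₃.ne') hz₂ hx₃ hz₃ hside hle
    have habove := mul_elevation_pos h₄.2 h₃.2 (hnc h₃.1 h₄.1 h₃₄.ne) hz₄ hx₃ hz₃ hside hle
    exact (neg_of_mul_pos_right hbelow (sub_nonpos.2 h₂₃.le)).not_gt
      (pos_of_mul_pos_right habove (sub_nonneg.2 h₃₄.le))
  · have hx₂ : x ∉ e₂ := fun hx => (h₂.2.mul_neg_of_mem hx hz₂ hxz).not_gt hside
    have hbelow := mul_elevation_pos h₁.2 h₂.2 (hnc h₂.1 h₁.1 h₁₂.ne') hx₁ hz₂ hx₂ hside hle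
    have habove := mul_elevation_pos h₃.2 h₂.2 (hnc h₂.1 h₃.1 h₂₃.ne) hx₃ hz₂ hx₂ hside hle
    exact (neg_of_mul_pos_right hbelow (sub_nonpos.2 h₁₂.le)).not_gt
      (pos_of_mul_pos_right habove (sub_nonneg.2 h₂₃.le))

lemma weight_eq_elevation_div (h : offset L y - offset L x ≠ 0) (z w : Pt) :
    weight z x y w = elevation L s(x, y) w / elevation L s(x, y) z := by
  rw [weight_apply, orient_rotate z, elevation_mk, elevation_mk, mul_div_mul_left _ _ h,
    div_eq_inv_mul]

lemma elevation_pos_of_elevation_neg (hxy : Crosses (offset L) s(x, y))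
    (hyz : Crosses (offset L) s(y, z)) (hz : elevation L s(x, y) z < 0) :
    0 < elevation L s(y, z) x := by
  rw [crosses_mk] at hxy hyz
  rw [elevation_mk, ← orient_rotate]
  rw [elevation_mk] at hz
  rcases mul_neg_iff.1 hxy with ⟨hx, hy⟩ | ⟨hx, hy⟩
  · have horient : 0 < orient x y z := pos_of_mul_neg_right hz (by linarith)
    exact mul_pos (by linarith [pos_of_mul_neg_right hyz hy.le]) horient
  · have horient : orient x y z < 0 := neg_of_mul_neg_right hz (by linarith)
    exact mul_pos_of_neg_of_neg (by linarith [neg_of_mul_neg_right hyz hy.le]) horient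

lemma mem_openTriangle_of_height_lt (hxy : Crosses (offset L) s(x, y))
    (hyz : Crosses (offset L) s(y, z)) (hz : elevation L s(x, y) z < 0) (hw : offset L w = 0)
    (hlow : height L s(y, z) < w.2) (hhigh : w.2 < height L s(x, y)) :
    w ∈ openTriangle x y z := by
  have hwz : 0 < weight z x y w := by
    rw [weight_eq_elevation_div (sub_ne_zero_of_crosses hxy)]
    exact div_pos_of_neg_of_neg ((hxy.elevation_neg_iff hw).2 hhigh) hz
  have hwx : 0 < weight x y z w := by
    rw [weight_eq_elevation_div (sub_ne_zero_of_crosses hyz)]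
    exact div_pos ((hyz.elevation_pos_iff hw).2 hlow) (elevation_pos_of_elevation_neg hxy hyz hz)
  have horient : orient x y z ≠ 0 := right_ne_zero_of_mul hz.ne
  have hsum := apply_eq_weight_mul_add horient (offset L) w
  refine ⟨hwx, ?_, hwz⟩
  rw [crosses_mk] at hxy hyz
  have hy : 0 < weight y z x w * offset L y ^ 2 := by
    linear_combination mul_neg_of_pos_of_neg hwx hxy + mul_neg_of_pos_of_neg hwz hyz
      - offset L y * hw + offset L y * hsum
  exact pos_of_mul_pos_left hy (sq_nonneg _)

/-- Directly below the crossing edge `xy` of the plane graph `G` lies the crossing edge `yz`, and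
`xyz` is an empty triangle of `G`. -/
structure IsNextBelow (L : ℝ × ℝ) (G : Finset (Sym2 Pt)) (x y z : Pt) : Prop where
  mem : s(x, y) ∈ crossingEdges L G
  mem_next : s(y, z) ∈ crossingEdges L G
  mem_third : s(x, z) ∈ G
  height_lt : height L s(y, z) < height L s(x, y)
  height_le : ∀ g ∈ crossingEdges L G, height L g < height L s(x, y) →
    height L g ≤ height L s(y, z)
  disjoint : ∀ g ∈ G, Disjoint (segOf g) (triInt x y z)

lemma isNextBelow_of_empty_triangle (hxy : s(x, y) ∈ crossingEdges L G)
    (hyz : s(y, z) ∈ crossingEdges L G) (hxz : s(x, z) ∈ G) (hz : elevation L s(x, y) z < 0)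
    (hempty : ∀ g ∈ G, Disjoint (segOf g) (openTriangle x y z)) : IsNextBelow L G x y z := by
  have hxyc := (mem_crossingEdges.1 hxy).2
  have hyzc := (mem_crossingEdges.1 hyz).2
  refine ⟨hxy, hyz, hxz, height_lt_of_elevation_neg hxyc hyzc hz, fun g hg hlt => ?_, fun g hg =>
    (hempty g hg).mono_right (triInt_subset_openTriangle (right_ne_zero_of_mul hz.ne))⟩
  obtain ⟨hgG, hgc⟩ := mem_crossingEdges.1 hg
  obtain ⟨w, hwg, hw0, hw2⟩ := hgc.exists_mem_segOf_snd_eq_height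
  by_contra! hgt
  exact Set.disjoint_left.1 (hempty g hgG) hwg
    (mem_openTriangle_of_height_lt hxyc hyzc hz hw0 (hw2 ▸ hgt) (hw2 ▸ hlt))

lemma exists_mem_elevation_neg (he : Crosses (offset L) e) (hf : Crosses (offset L) f)
    (h : height L f < height L e) : ∃ p ∈ f, elevation L e p < 0 := by
  obtain ⟨w, hw, hw0, hw2⟩ := hf.exists_mem_segOf_snd_eq_height
  obtain ⟨p, hp, hpw⟩ := exists_mem_le_apply (elevation L e) hw
  exact ⟨p, hp, hpw.trans_lt ((he.elevation_neg_iff hw0).2 (hw2 ▸ h))⟩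

lemma exists_isNextBelow (hS : GenPos S) (hG : Maximal (IsPlaneGraph S) G)
    (hL : ∀ p ∈ S, offset L p ≠ 0) (he : e ∈ crossingEdges L G) (hf : f ∈ crossingEdges L G)
    (hfe : height L f < height L e) : ∃ x y z, e = s(x, y) ∧ IsNextBelow L G x y z := by
  obtain ⟨heG, hec⟩ := mem_crossingEdges.1 he
  obtain ⟨hfG, hfc⟩ := mem_crossingEdges.1 hf
  obtain ⟨a, haf, ha⟩ := exists_mem_elevation_neg hec hfc hfe
  obtain ⟨p, hp, q, hq, hp0, hq0⟩ := hec
  obtain rfl : e = s(q, p) :=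
    (Sym2.mem_and_mem_iff (by rintro rfl; exact hp0.not_gt hq0)).1 ⟨hq, hp⟩
  have hqp : offset L p - offset L q < 0 := by linarith
  obtain ⟨z, hz, hqz, hpz, hempty⟩ := exists_empty_triangle hS hG heG
    ⟨a, (hG.prop.isEdgeOn f hfG).2 a haf, pos_of_mul_neg_right ha hqp.le⟩
  have hz' : elevation L s(q, p) z < 0 := mul_neg_of_neg_of_pos hqp hz
  rcases (hL z ((hG.prop.isEdgeOn _ hqz).2 z (by simp))).lt_or_gt with hz0 | hz0
  · have hcross : Crosses (offset L) s(q, z) := crosses_mk.2 (mul_neg_of_pos_of_neg hq0 hz0)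
    rw [openTriangle_swap] at hempty
    rw [Sym2.eq_swap] at he hz'
    exact ⟨p, q, z, Sym2.eq_swap, isNextBelow_of_empty_triangle he
      (mem_crossingEdges.2 ⟨hqz, hcross⟩) hpz hz' hempty⟩
  · have hcross : Crosses (offset L) s(p, z) := crosses_mk.2 (mul_neg_of_neg_of_pos hp0 hz0)
    exact ⟨q, p, z, rfl, isNextBelow_of_empty_triangle he
      (mem_crossingEdges.2 ⟨hpz, hcross⟩) hqz hz' hempty⟩

namespace IsNextBelow

lemma mul_pos (h : IsNextBelow L G x y z) : 0 < offset L x * offset L z :=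
  mul_pos_of_crosses (mem_crossingEdges.1 h.mem).2 (mem_crossingEdges.1 h.mem_next).2

lemma ne (h : IsNextBelow L G x y z) : x ≠ z := by
  rintro rfl
  exact h.height_lt.ne (congrArg _ Sym2.eq_swap)

lemma eq_of_next_eq {x' y' z' : Pt} (hG : IsPlaneGraph S G) (h : IsNextBelow L G x y z)
    (h' : IsNextBelow L G x' y' z') (hnext : s(y, z) = s(y', z')) : s(x, y) = s(x', y') := by
  refine hG.height_injOn h.mem h'.mem (le_antisymm ?_ ?_) <;> by_contra! hlt
  · exact (h.height_le _ h'.mem hlt).not_gt (hnext ▸ h'.height_lt)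
  · exact (h'.height_le _ h.mem hlt).not_gt (hnext ▸ h.height_lt)

lemma exists_rotation (h : IsNextBelow L G x y z) (hG : IsPlaneGraph S G) (hT : IsPST S T)
    (hTG : T ⊆ G) (hle : ∀ f ∈ crossingEdges L T, height L f ≤ height L s(x, y)) :
    ∃ T' ⊆ G, SimEmptyTriRot S T T' ∧
      ∀ f ∈ crossingEdges L T', height L f ≤ height L s(y, z) := by
  have hold : ∀ f ∈ T, f ≠ s(x, y) → Crosses (offset L) f → height L f ≤ height L s(y, z) := by
    intro f hf hne hfc
    have hfG := mem_crossingEdges.2 ⟨hTG hf, hfc⟩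
    exact h.height_le f hfG ((hle f (mem_crossingEdges.2 ⟨hf, hfc⟩)).lt_of_ne
      fun heq => hne (hG.height_injOn hfG h.mem heq))
  by_cases hxyT : s(x, y) ∈ T
  · have hyzG := (mem_crossingEdges.1 h.mem_next).1
    obtain ⟨f, hf, hrot⟩ := SimEmptyTriRot.exists_of_empty_triangle hG hT hTG hxyT h.mem_third
      hyzG h.disjoint
    have hfG : f ∈ G := by rcases hf with rfl | rfl; exacts [h.mem_third, hyzG]
    refine ⟨_, Finset.insert_subset hfG ((Finset.erase_subset _ _).trans hTG), hrot,
      fun k hk => ?_⟩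
    obtain ⟨hk, hkc⟩ := mem_crossingEdges.1 hk
    rcases Finset.mem_insert.1 hk with rfl | hk
    · rcases hf with rfl | rfl
      · exact absurd (crosses_mk.1 hkc) h.mul_pos.not_gt
      · exact le_rfl
    · exact hold k (Finset.mem_of_mem_erase hk) (Finset.ne_of_mem_erase hk) hkc
  · refine ⟨T, hTG, .refl hT, fun f hf => ?_⟩
    obtain ⟨hf, hfc⟩ := mem_crossingEdges.1 hf
    exact hold f hf (by rintro rfl; exact hxyT hf) hfc

end IsNextBelow

lemma exists_reachesIn_crossing_lowest (hS : GenPos S) (hG : Maximal (IsPlaneGraph S) G)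
    (hL : ∀ p ∈ S, offset L p ≠ 0) (hT : IsPST S T) (hTG : T ⊆ G) (he : e ∈ crossingEdges L G)
    (hle : ∀ f ∈ crossingEdges L T, height L f ≤ height L e) :
    ∃ T', IsPST S T' ∧
      (∀ f ∈ crossingEdges L T', f ∈ G ∧ ∀ g ∈ crossingEdges L G, height L f ≤ height L g) ∧
      ReachesIn (SimEmptyTriRot S)
        {g ∈ crossingEdges L G | height L g < height L e}.card T T' := by
  induction hn : {g ∈ crossingEdges L G | height L g < height L e}.card
    using Nat.strong_induction_on generalizing e T with | _ n ih =>
  by_cases hlow : ∃ g ∈ crossingEdges L G, height L g < height L e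
  · obtain ⟨g, hg, hge⟩ := hlow
    obtain ⟨x, y, z, rfl, hnext⟩ := exists_isNextBelow hS hG hL he hg hge
    obtain ⟨T₁, hT₁G, hrot, hT₁le⟩ := hnext.exists_rotation hG.prop hT hTG hle
    have hcard : {g ∈ crossingEdges L G | height L g < height L s(y, z)}.card < n := by
      rw [← hn]
      refine Finset.card_lt_card (Finset.ssubset_iff_of_subset (Finset.monotone_filter_right _
        fun g _ hlt => hlt.trans hnext.height_lt) |>.2 ⟨s(y, z), ?_, by simp⟩)
      exact Finset.mem_filter.2 ⟨hnext.mem_next, hnext.height_lt⟩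
    obtain ⟨T', hT', hlowest, hreach⟩ := ih _ hcard hrot.2.1 hT₁G hnext.mem_next hT₁le rfl
    exact ⟨T', hT', hlowest, (hreach.head hrot).mono hcard⟩
  · push Not at hlow
    refine ⟨T, hT, fun f hf => ?_, .refl _ _ _⟩
    exact ⟨hTG (mem_crossingEdges.1 hf).1, fun g hg => (hle f hf).trans (hlow g hg)⟩

/-! ### Counting crossing edges -/

/-- Among the crossing edges of `G` at the vertex `p`, the lowest one is `e`. -/
structure IsLowestAt (L : ℝ × ℝ) (G : Finset (Sym2 Pt)) (p : Pt) (e : Sym2 Pt) : Prop where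
  mem : e ∈ crossingEdges L G
  mem_edge : p ∈ e
  height_le : ∀ g ∈ crossingEdges L G, p ∈ g → height L e ≤ height L g

/-- Among the crossing edges of `G` at the vertex `p`, the highest one is `e`. -/
structure IsHighestAt (L : ℝ × ℝ) (G : Finset (Sym2 Pt)) (p : Pt) (e : Sym2 Pt) : Prop where
  mem : e ∈ crossingEdges L G
  mem_edge : p ∈ e
  le_height : ∀ g ∈ crossingEdges L G, p ∈ g → height L g ≤ height L e

lemma IsLowestAt.unique (hG : IsPlaneGraph S G) (he : IsLowestAt L G p e)
    (hf : IsLowestAt L G p f) : e = f :=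
  hG.height_injOn he.mem hf.mem
    (le_antisymm (he.height_le f hf.mem hf.mem_edge) (hf.height_le e he.mem he.mem_edge))

lemma IsHighestAt.unique (hG : IsPlaneGraph S G) (he : IsHighestAt L G p e)
    (hf : IsHighestAt L G p f) : e = f :=
  hG.height_injOn he.mem hf.mem
    (le_antisymm (hf.le_height e he.mem he.mem_edge) (he.le_height f hf.mem hf.mem_edge))

lemma IsNextBelow.isLowestAt_or_isHighestAt (hG : IsPlaneGraph S G)
    (h : IsNextBelow L G x y z) : IsLowestAt L G x s(x, y) ∨ IsHighestAt L G z s(y, z) := by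
  by_contra! hcon
  obtain ⟨g, hg, hxg, hgH⟩ : ∃ g ∈ crossingEdges L G, x ∈ g ∧ height L g < height L s(x, y) := by
    by_contra! hlow
    exact hcon.1 ⟨h.mem, by simp, hlow⟩
  obtain ⟨k, hk, hzk, hkH⟩ : ∃ k ∈ crossingEdges L G, z ∈ k ∧ height L s(y, z) < height L k := by
    by_contra! hhigh
    exact hcon.2 ⟨h.mem_next, by simp, hhigh⟩
  have hg_ne : g ≠ s(y, z) := by
    rintro rfl
    exact ((mem_crossingEdges.1 hg).2.mul_neg_of_mem hxg (by simp) h.ne).not_gt h.mul_pos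
  have hk_ne : k ≠ s(x, y) := by
    rintro rfl
    exact ((mem_crossingEdges.1 hk).2.mul_neg_of_mem (by simp) hzk h.ne).not_gt h.mul_pos
  have hg_lt : height L g < height L s(y, z) := (h.height_le g hg hgH).lt_of_ne
    fun heq => hg_ne (hG.height_injOn hg h.mem_next heq)
  have hk_gt : height L s(x, y) < height L k := by
    refine lt_of_le_of_ne ?_ fun heq => hk_ne (hG.height_injOn hk h.mem heq.symm)
    by_contra! hlt
    exact (h.height_le k hk hlt).not_gt hkH
  exact hG.not_interleaved hg h.mem_next h.mem hk hxg (by simp) (by simp) hzk h.ne h.mul_pos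
    hg_lt h.height_lt hk_gt

lemma card_isLowestAt_add_one_le (hG : IsPlaneGraph S G) (he : e ∈ crossingEdges L G)
    (hlow : ∀ g ∈ crossingEdges L G, height L e ≤ height L g) :
    {f ∈ crossingEdges L G | ∃ p, IsLowestAt L G p f}.card + 1 ≤ S.card := by
  have hlow_at : ∀ p ∈ e, IsLowestAt L G p e := fun p hp => ⟨he, hp, fun g hg _ => hlow g hg⟩
  obtain ⟨heG, hec⟩ := mem_crossingEdges.1 he
  have hS := (hG.isEdgeOn e heG).2
  obtain ⟨l, hl, r, hr, hl0, hr0⟩ := hec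
  have hlr : r ≠ l := by rintro rfl; exact hl0.not_gt hr0
  rw [← Finset.card_erase_add_one (hS l hl), Nat.add_le_add_iff_right]
  refine Finset.card_le_card_of_forall_subsingleton (fun f p => IsLowestAt L G p f) ?_
    fun p _ f hf g hg => hf.2.unique hG hg.2
  intro f hf
  obtain ⟨hfG, p, hp⟩ := Finset.mem_filter.1 hf
  by_cases hpl : p = l
  · obtain rfl : f = e := hp.unique hG (hpl ▸ hlow_at l hl)
    exact ⟨r, Finset.mem_erase.2 ⟨hlr, hS r hr⟩, hlow_at r hr⟩
  · exact ⟨p, Finset.mem_erase.2 ⟨hpl,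
      (hG.isEdgeOn f (mem_crossingEdges.1 hfG).1).2 p hp.mem_edge⟩, hp⟩

lemma card_not_isLowestAt_le (hS : GenPos S) (hG : Maximal (IsPlaneGraph S) G)
    (hL : ∀ p ∈ S, offset L p ≠ 0) :
    {f ∈ crossingEdges L G | ¬ ∃ p, IsLowestAt L G p f}.card ≤ S.card := by
  refine Finset.card_le_card_of_forall_subsingleton
    (fun f z => ∃ x y, f = s(x, y) ∧ IsNextBelow L G x y z ∧ IsHighestAt L G z s(y, z)) ?_ ?_
  · intro f hf
    obtain ⟨hfG, hflow⟩ := Finset.mem_filter.1 hf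
    push Not at hflow
    obtain ⟨g, hg, hgf⟩ : ∃ g ∈ crossingEdges L G, height L g < height L f := by
      by_contra! hlow
      obtain ⟨p, hp, -⟩ := (mem_crossingEdges.1 hfG).2
      exact hflow p ⟨hfG, hp, fun g hg _ => hlow g hg⟩
    obtain ⟨x, y, z, rfl, hnext⟩ := exists_isNextBelow hS hG hL hfG hg hgf
    have hz : z ∈ S := (hG.prop.isEdgeOn _ hnext.mem_third).2 z (by simp)
    exact ⟨z, hz, x, y, rfl, hnext,
      (hnext.isLowestAt_or_isHighestAt hG.prop).resolve_left (hflow x)⟩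
  · rintro z - f ⟨-, x, y, rfl, hnext, htop⟩ g ⟨-, x', y', rfl, hnext', htop'⟩
    exact hnext.eq_of_next_eq hG.prop hnext' (htop.unique hG.prop htop')

theorem card_crossingEdges_lt (hS : GenPos S) (hG : Maximal (IsPlaneGraph S) G)
    (hL : ∀ p ∈ S, offset L p ≠ 0) (hne : (crossingEdges L G).Nonempty) :
    (crossingEdges L G).card < 2 * S.card := by
  obtain ⟨e, he, hlow⟩ := Finset.exists_min_image _ (height L) hne
  have hlowest := card_isLowestAt_add_one_le hG.prop he hlow
  have hrest := card_not_isLowestAt_le hS hG hL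
  rw [← Finset.card_filter_add_card_filter_not fun f => ∃ p, IsLowestAt L G p f]
  omega

/-! ### The lower bridge -/

/-- `lr` is the lower bridge over the line `φ = 0`: the edge of the convex hull of `S` that leads
from the side `φ < 0` to the side `0 < φ` with all of `S` on its left. -/
structure IsBridge (φ : Pt →ᵃ[ℝ] ℝ) (S : Finset Pt) (l r : Pt) : Prop where
  left_mem : l ∈ S
  right_mem : r ∈ S
  left_neg : φ l < 0
  right_pos : 0 < φ r
  orient_nonneg : ∀ p ∈ S, 0 ≤ orient l r p

namespace IsBridge

variable {φ : Pt →ᵃ[ℝ] ℝ} {l r : Pt}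

lemma ne (h : IsBridge φ S l r) : l ≠ r := by
  rintro rfl
  exact h.left_neg.not_gt h.right_pos

lemma isEdgeOn (h : IsBridge φ S l r) : IsEdgeOn S s(l, r) :=
  isEdgeOn_mk.2 ⟨h.ne, h.left_mem, h.right_mem⟩

lemma crosses (h : IsBridge φ S l r) : Crosses φ s(l, r) :=
  crosses_mk.2 (mul_neg_of_neg_of_pos h.left_neg h.right_pos)

lemma mem_of_maximal (h : IsBridge φ S l r) (hS : GenPos S)
    (hG : Maximal (IsPlaneGraph S) G) : s(l, r) ∈ G := by
  by_contra hmem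
  obtain ⟨f, hf, -, -, -, a, ha, -, -, hneg, -⟩ :=
    exists_crossing_edge_of_notMem hS hG h.isEdgeOn hmem
  exact hneg.not_ge (h.orient_nonneg a ((hG.prop.isEdgeOn f hf).2 a ha))

lemma height_le (h : IsBridge (offset L) S l r) (he : Crosses (offset L) e)
    (heS : ∀ p ∈ e, p ∈ S) : height L s(l, r) ≤ height L e := by
  by_contra! hlt
  obtain ⟨p, hp, hneg⟩ := exists_mem_elevation_neg h.crosses he hlt
  exact hneg.not_ge (mul_nonneg (by linarith [h.left_neg, h.right_pos])
    (h.orient_nonneg p (heS p hp)))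

end IsBridge

lemma exists_isBridge (hL : ∀ p ∈ S, offset L p ≠ 0) (hneg : ∃ p ∈ S, offset L p < 0)
    (hpos : ∃ p ∈ S, 0 < offset L p) : ∃ l r, IsBridge (offset L) S l r := by
  obtain ⟨l₀, hl₀, hl₀_neg⟩ := hneg
  obtain ⟨r₀, hr₀, hr₀_pos⟩ := hpos
  -- The bridge is the lowest segment joining two points of `S` across the line.
  obtain ⟨⟨l, r⟩, hlr, hmin⟩ := Finset.exists_min_image
    (S.filter (offset L · < 0) ×ˢ S.filter (0 < offset L ·)) (fun q => height L s(q.1, q.2))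
    ⟨(l₀, r₀), by simp [hl₀, hr₀, hl₀_neg, hr₀_pos]⟩
  simp only [Finset.mem_product, Finset.mem_filter] at hlr hmin
  obtain ⟨⟨hl, hl_neg⟩, hr, hr_pos⟩ := hlr
  have hcross : Crosses (offset L) s(l, r) := crosses_mk.2 (mul_neg_of_neg_of_pos hl_neg hr_pos)
  refine ⟨l, r, hl, hr, hl_neg, hr_pos, fun p hp => ?_⟩
  by_contra! hp_neg
  have helev : elevation L s(l, r) p < 0 := mul_neg_of_pos_of_neg (by linarith) hp_neg
  rcases (hL p hp).lt_or_gt with hp0 | hp0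
  · have hlt := height_lt_of_elevation_neg hcross
      (crosses_mk.2 (mul_neg_of_pos_of_neg hr_pos hp0)) helev
    rw [Sym2.eq_swap (a := r)] at hlt
    exact hlt.not_ge (hmin (p, r) ⟨⟨hp, hp0⟩, hr, hr_pos⟩)
  · rw [Sym2.eq_swap] at hcross helev
    have hlt := height_lt_of_elevation_neg hcross
      (crosses_mk.2 (mul_neg_of_neg_of_pos hl_neg hp0)) helev
    rw [Sym2.eq_swap (a := r)] at hlt
    exact hlt.not_ge (hmin (l, p) ⟨⟨hl, hl_neg⟩, hp, hp0⟩)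

theorem IsBridge.exists_reachesIn {l r : Pt} (hb : IsBridge (offset L) S l r) (hS : GenPos S)
    (hL : ∀ p ∈ S, offset L p ≠ 0) (hT : IsPST S T) :
    ∃ T', IsPST S T' ∧ (∀ f ∈ T', Crosses (offset L) f → f = s(l, r)) ∧
      ReachesIn (SimEmptyTriRot S) (2 * S.card - 2) T T' := by
  obtain ⟨G, hTG, hG⟩ := hT.isPlaneGraph.exists_maximal
  have hbG := mem_crossingEdges.2 ⟨hb.mem_of_maximal hS hG, hb.crosses⟩
  obtain ⟨e, he, hmax⟩ := Finset.exists_max_image _ (height L) ⟨_, hbG⟩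
  obtain ⟨T', hT', hlowest, hreach⟩ := exists_reachesIn_crossing_lowest hS hG hL hT hTG he
    fun f hf => hmax f (Finset.filter_subset_filter _ hTG hf)
  refine ⟨T', hT', fun f hf hfc => ?_, hreach.mono ?_⟩
  · obtain ⟨hfG, hle⟩ := hlowest f (mem_crossingEdges.2 ⟨hf, hfc⟩)
    exact hG.prop.height_injOn (mem_crossingEdges.2 ⟨hfG, hfc⟩) hbG
      (le_antisymm (hle _ hbG) (hb.height_le hfc (hG.prop.isEdgeOn f hfG).2))
  · have hsub : {g ∈ crossingEdges L G | height L g < height L e} ⊂ crossingEdges L G :=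
      Finset.filter_ssubset.2 ⟨e, he, lt_irrefl _⟩
    have hlt := Finset.card_lt_card hsub
    have hcount := card_crossingEdges_lt hS hG hL ⟨e, he⟩
    omega

end CrossingEdges

/-! ### The two sides of a line -/

lemma crosses_neg {φ : Pt →ᵃ[ℝ] ℝ} {e : Sym2 Pt} : Crosses (-φ) e ↔ Crosses φ e := by
  induction e with | _ p q =>
  simp only [crosses_mk, AffineMap.coe_neg, Pi.neg_apply, neg_mul_neg]

lemma EdgeReach.filter {α : Type*} {E : Finset (Sym2 α)} {Q : α → Prop} {v p q : α}
    (hgate : ∀ a c, s(a, c) ∈ E → Q a → ¬ Q c → a = v) (h : EdgeReach E p q) (hp : Q p)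
    (hq : Q q) : EdgeReach (E.filter fun e => ∀ x ∈ e, Q x) p q := by
  -- Retract the path onto `Q` by sending every vertex outside `Q` to the gate `v`.
  let retract : α → α := fun x => if Q x then x else v
  have hretract : EdgeReach (E.filter fun e => ∀ x ∈ e, Q x) (retract p) (retract q) := by
    refine Relation.ReflTransGen.lift' retract (fun b c hbc => ?_) _ _ h
    change EdgeReach _ (retract b) (retract c)
    by_cases hb : Q b <;> by_cases hc : Q c <;> simp only [retract, hb, hc, if_true, if_false]
    · exact .single (by simp [hbc, hb, hc])
    · rw [hgate b c hbc hb hc]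
    · rw [hgate c b (Sym2.eq_swap ▸ hbc) hc hb]
    · exact .refl
  simpa only [retract, hp, hq, if_true] using hretract

/-- The points of `S` in the open half-plane `0 < φ`; the opposite side is `side (-φ) S`. -/
def side (φ : Pt →ᵃ[ℝ] ℝ) (S : Finset Pt) : Finset Pt := S.filter (0 < φ ·)

/-- The edges of `E` with both endpoints in the open half-plane `0 < φ`. -/
def sideEdges (φ : Pt →ᵃ[ℝ] ℝ) (E : Finset (Sym2 Pt)) : Finset (Sym2 Pt) :=
  E.filter fun e => ∀ p ∈ e, 0 < φ p

/-- The tree obtained from the trees `A` and `B` on the two sides of a line by joining them with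
the edge `b`. -/
def joinTrees (b : Sym2 Pt) (A B : Finset (Sym2 Pt)) : Finset (Sym2 Pt) := insert b (A ∪ B)

section Sides

variable {φ : Pt →ᵃ[ℝ] ℝ} {S : Finset Pt} {T A A' B B' : Finset (Sym2 Pt)} {e : Sym2 Pt}
  {b : Sym2 Pt} {l r p q t u v : Pt}

lemma mem_side : p ∈ side φ S ↔ p ∈ S ∧ 0 < φ p := Finset.mem_filter

lemma mem_sideEdges_mk : s(p, q) ∈ sideEdges φ T ↔ s(p, q) ∈ T ∧ 0 < φ p ∧ 0 < φ q := by
  rw [sideEdges, Finset.mem_filter, Sym2.ball]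

lemma side_subset (φ : Pt →ᵃ[ℝ] ℝ) (S : Finset Pt) : side φ S ⊆ S := Finset.filter_subset _ _

lemma mem_side_neg_or_mem_side (hφ : ∀ p ∈ S, φ p ≠ 0) (hp : p ∈ S) :
    p ∈ side (-φ) S ∨ p ∈ side φ S :=
  (hφ p hp).lt_or_gt.imp (fun h => mem_side.2 ⟨hp, neg_pos.2 h⟩) fun h => mem_side.2 ⟨hp, h⟩

lemma disjoint_side_neg_side (φ : Pt →ᵃ[ℝ] ℝ) (S : Finset Pt) :
    Disjoint (side (-φ) S) (side φ S) :=
  Finset.disjoint_left.2 fun _ hneg hpos =>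
    (neg_pos.1 (mem_side.1 hneg).2).not_gt (mem_side.1 hpos).2

lemma card_side_neg_add_card_side (hφ : ∀ p ∈ S, φ p ≠ 0) :
    (side (-φ) S).card + (side φ S).card = S.card := by
  rw [← Finset.card_union_of_disjoint (disjoint_side_neg_side φ S)]
  congr 1
  exact (Finset.union_subset (side_subset _ S) (side_subset _ S)).antisymm fun p hp =>
    Finset.mem_union.2 (mem_side_neg_or_mem_side hφ hp)

lemma IsPlaneGraph.of_subset {S' : Finset Pt} (hSS' : S ⊆ S') (hA : IsPlaneGraph S A) :
    IsPlaneGraph S' A :=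
  ⟨fun e he => ⟨(hA.isEdgeOn e he).1, fun p hp => hSS' ((hA.isEdgeOn e he).2 p hp)⟩, hA.noCross⟩

lemma IsPlaneGraph.sideEdges (hT : IsPlaneGraph S T) (φ : Pt →ᵃ[ℝ] ℝ) :
    IsPlaneGraph (side φ S) (sideEdges φ T) := by
  refine ⟨fun e he => ?_, (hT.subset (Finset.filter_subset _ _)).noCross⟩
  obtain ⟨heT, hpos⟩ := Finset.mem_filter.1 he
  obtain ⟨hdiag, hmem⟩ := hT.isEdgeOn e heT
  exact ⟨hdiag, fun p hp => mem_side.2 ⟨hmem p hp, hpos p hp⟩⟩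

lemma IsPlaneGraph.disjoint_of_side (hA : IsPlaneGraph (side (-φ) S) A)
    (hB : IsPlaneGraph (side φ S) B) : Disjoint A B := by
  refine Finset.disjoint_left.2 fun e heA heB => ?_
  exact Finset.disjoint_left.1 (disjoint_side_neg_side φ S)
    ((hA.isEdgeOn e heA).2 _ e.out_fst_mem) ((hB.isEdgeOn e heB).2 _ e.out_fst_mem)

lemma segOf_subset_of_side (he : IsEdgeOn (side φ S) e) : segOf e ⊆ φ ⁻¹' Set.Ioi 0 :=
  segOf_subset_of_convex ((convex_Ioi 0).affine_preimage φ) fun p hp => (mem_side.1 (he.2 p hp)).2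

lemma disjoint_preimage_Ioi_neg (φ : Pt →ᵃ[ℝ] ℝ) :
    Disjoint ((-φ) ⁻¹' Set.Ioi 0) (φ ⁻¹' Set.Ioi 0) :=
  Set.disjoint_left.2 fun w hneg hpos =>
    (neg_pos.1 (show 0 < -φ w from hneg)).not_gt hpos

lemma disjoint_segOf_triInt_of_side (he : IsEdgeOn (side (-φ) S) e) (hp : p ∈ side φ S)
    (hq : q ∈ side φ S) (ht : t ∈ side φ S) : Disjoint (segOf e) (triInt p q t) :=
  (disjoint_preimage_Ioi_neg φ).mono (segOf_subset_of_side he)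
    (triInt_subset_of_convex ((convex_Ioi 0).affine_preimage φ) (mem_side.1 hp).2 (mem_side.1 hq).2
      (mem_side.1 ht).2)

lemma noCrossPair_of_side {f : Sym2 Pt} (he : IsEdgeOn (side (-φ) S) e)
    (hf : IsEdgeOn (side φ S) f) : NoCrossPair e f := fun _ hw =>
  (Set.disjoint_left.1 (disjoint_preimage_Ioi_neg φ) (segOf_subset_of_side he hw.1)
    (segOf_subset_of_side hf hw.2)).elim

/-! ### Splitting a tree at the bridge -/

lemma mem_joinTrees : e ∈ joinTrees b A B ↔ e = b ∨ e ∈ A ∨ e ∈ B := by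
  simp [joinTrees]

lemma joinTrees_comm (b : Sym2 Pt) (A B : Finset (Sym2 Pt)) :
    joinTrees b A B = joinTrees b B A := by
  rw [joinTrees, joinTrees, Finset.union_comm]

lemma joinTrees_union_joinTrees (b : Sym2 Pt) (A A' B B' : Finset (Sym2 Pt)) :
    joinTrees b A B ∪ joinTrees b A' B' = joinTrees b (A ∪ A') (B ∪ B') := by
  ext e
  simp only [Finset.mem_union, mem_joinTrees]
  tauto

lemma joinTrees_sdiff_joinTrees (hb : b ∉ A ∪ B) (hAB' : Disjoint A B') (hA'B : Disjoint A' B) :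
    joinTrees b A B \ joinTrees b A' B' = (A \ A') ∪ (B \ B') := by
  ext e
  have hA : e ∈ A → e ∉ B' := fun he => Finset.disjoint_left.1 hAB' he
  have hB : e ∈ B → e ∉ A' := fun he => Finset.disjoint_right.1 hA'B he
  have hne : e ∈ A ∪ B → e ≠ b := fun he heb => hb (heb ▸ he)
  simp only [Finset.mem_sdiff, Finset.mem_union, mem_joinTrees] at hne ⊢
  tauto

lemma edgeReach_sideEdges (hφ : ∀ p ∈ S, φ p ≠ 0) (hT : IsPST S T) (hu : φ u < 0)
    (hcross : ∀ f ∈ T, Crosses φ f → f = s(u, v)) (hp : p ∈ side φ S) (hq : q ∈ side φ S) :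
    EdgeReach (sideEdges φ T) p q := by
  obtain ⟨hpS, hp0⟩ := mem_side.1 hp
  obtain ⟨hqS, hq0⟩ := mem_side.1 hq
  refine EdgeReach.filter (v := v) (fun a c hac ha hc => ?_) (hT.edgeReach hpS hqS) hp0 hq0
  have hc0 : φ c < 0 :=
    (not_lt.1 hc).lt_of_ne (hφ c ((hT.isPlaneGraph.isEdgeOn _ hac).2 c (by simp)))
  have heq := hcross _ hac (crosses_mk.2 (mul_neg_of_pos_of_neg ha hc0))
  refine (Sym2.mem_iff.1 (heq ▸ Sym2.mem_mk_left a c)).resolve_left ?_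
  rintro rfl
  exact hu.not_gt ha

namespace IsBridge

lemma notMem_union (hb : IsBridge φ S l r) (hA : IsPlaneGraph (side (-φ) S) A)
    (hB : IsPlaneGraph (side φ S) B) : s(l, r) ∉ A ∪ B := by
  refine Finset.notMem_union.2 ⟨fun h => ?_, fun h => ?_⟩
  · exact (neg_pos.1 (mem_side.1 ((hA.isEdgeOn _ h).2 r (by simp))).2).not_gt hb.right_pos
  · exact (mem_side.1 ((hB.isEdgeOn _ h).2 l (by simp))).2.not_gt hb.left_neg

lemma card_joinTrees (hb : IsBridge φ S l r) (hA : IsPlaneGraph (side (-φ) S) A)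
    (hB : IsPlaneGraph (side φ S) B) :
    (joinTrees s(l, r) A B).card = A.card + B.card + 1 := by
  rw [joinTrees, Finset.card_insert_of_notMem (hb.notMem_union hA hB),
    Finset.card_union_of_disjoint (hA.disjoint_of_side hB)]

lemma mem_of_isPST (hb : IsBridge φ S l r) (hφ : ∀ p ∈ S, φ p ≠ 0) (hT : IsPST S T)
    (hcross : ∀ f ∈ T, Crosses φ f → f = s(l, r)) : s(l, r) ∈ T := by
  by_contra hmem
  have hneg : ∀ q, EdgeReach T l q → φ q < 0 := by
    intro q hq
    induction hq with
    | refl => exact hb.left_neg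
    | @tail b c _ hbc hb0 =>
      have hcS : c ∈ S := (hT.isPlaneGraph.isEdgeOn _ hbc).2 c (by simp)
      refine (hφ c hcS).lt_of_le (not_lt.1 fun hc0 => ?_)
      exact hmem (hcross _ hbc (crosses_mk.2 (mul_neg_of_neg_of_pos hb0 hc0)) ▸ hbc)
  exact (hneg r (hT.edgeReach hb.left_mem hb.right_mem)).not_gt hb.right_pos

lemma eq_joinTrees (hb : IsBridge φ S l r) (hφ : ∀ p ∈ S, φ p ≠ 0) (hT : IsPST S T)
    (hcross : ∀ f ∈ T, Crosses φ f → f = s(l, r)) :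
    T = joinTrees s(l, r) (sideEdges (-φ) T) (sideEdges φ T) := by
  ext e
  rw [mem_joinTrees]
  refine ⟨fun he => ?_, ?_⟩
  · by_cases hec : Crosses φ e
    · exact .inl (hcross e he hec)
    induction e with | _ p q =>
    obtain ⟨-, hp, hq⟩ := isEdgeOn_mk.1 (hT.isPlaneGraph.isEdgeOn _ he)
    rcases (hφ p hp).lt_or_gt with hp0 | hp0 <;> rcases (hφ q hq).lt_or_gt with hq0 | hq0
    · exact .inr (.inl (mem_sideEdges_mk.2 ⟨he, neg_pos.2 hp0, neg_pos.2 hq0⟩))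
    · exact absurd (crosses_mk.2 (mul_neg_of_neg_of_pos hp0 hq0)) hec
    · exact absurd (crosses_mk.2 (mul_neg_of_pos_of_neg hp0 hq0)) hec
    · exact .inr (.inr (mem_sideEdges_mk.2 ⟨he, hp0, hq0⟩))
  · rintro (rfl | he | he)
    · exact hb.mem_of_isPST hφ hT hcross
    · exact Finset.filter_subset _ _ he
    · exact Finset.filter_subset _ _ he

lemma left_mem_side (hb : IsBridge φ S l r) : l ∈ side (-φ) S :=
  mem_side.2 ⟨hb.left_mem, neg_pos.2 hb.left_neg⟩

lemma right_mem_side (hb : IsBridge φ S l r) : r ∈ side φ S :=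
  mem_side.2 ⟨hb.right_mem, hb.right_pos⟩

lemma isPST_sideEdges (hb : IsBridge φ S l r) (hφ : ∀ p ∈ S, φ p ≠ 0) (hT : IsPST S T)
    (hcross : ∀ f ∈ T, Crosses φ f → f = s(l, r)) :
    IsPST (side (-φ) S) (sideEdges (-φ) T) ∧ IsPST (side φ S) (sideEdges φ T) := by
  have hA := hT.isPlaneGraph.sideEdges (-φ)
  have hB := hT.isPlaneGraph.sideEdges φ
  have hA_conn : ∀ p ∈ side (-φ) S, ∀ q ∈ side (-φ) S, EdgeReach (sideEdges (-φ) T) p q :=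
    fun p hp q hq => edgeReach_sideEdges (u := r) (v := l) (fun p hp => neg_ne_zero.2 (hφ p hp)) hT
      (neg_neg_iff_pos.2 hb.right_pos)
      (fun f hf hfc => (hcross f hf (crosses_neg.1 hfc)).trans Sym2.eq_swap) hp hq
  have hB_conn : ∀ p ∈ side φ S, ∀ q ∈ side φ S, EdgeReach (sideEdges φ T) p q :=
    fun p hp q hq => edgeReach_sideEdges hφ hT hb.left_neg hcross hp hq
  have hA_card := card_le_card_edges_add_one ⟨l, hb.left_mem_side⟩
    (fun e he => (hA.isEdgeOn e he).2) hA_conn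
  have hB_card := card_le_card_edges_add_one ⟨r, hb.right_mem_side⟩
    (fun e he => (hB.isEdgeOn e he).2) hB_conn
  have hT_card := hT.card_add_one
  have hjoin_card := hb.card_joinTrees hA hB
  have hS_card := card_side_neg_add_card_side hφ
  rw [← hb.eq_joinTrees hφ hT hcross] at hjoin_card
  exact ⟨⟨hA.isEdgeOn, hA.noCross, by omega, hA_conn⟩, ⟨hB.isEdgeOn, hB.noCross, by omega, hB_conn⟩⟩

/-! ### Rotating on both sides of the bridge simultaneously -/

lemma noCrossPair (hb : IsBridge φ S l r) (hS : GenPos S) (he : IsEdgeOn S e)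
    (hne : e ≠ s(l, r)) : NoCrossPair s(l, r) e := by
  by_contra h
  obtain ⟨-, -, -, a, ha, -, -, hneg, -⟩ :=
    exists_orient_neg_pos_of_not_noCrossPair hS hb.isEdgeOn he hne h
  exact hneg.not_ge (hb.orient_nonneg a (he.2 a ha))

lemma disjoint_triInt (hb : IsBridge φ S l r) (hp : p ∈ S) (hq : q ∈ S) (ht : t ∈ S) :
    Disjoint (segOf s(l, r)) (triInt p q t) := by
  obtain ⟨c, hc⟩ := exists_orient_ne_zero hb.ne
  refine Set.disjoint_left.2 fun w hw hwt => ?_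
  refine (apply_pos_of_mem_triInt (u := c) (v := l) (by simpa using hc) (hb.orient_nonneg p hp)
    (hb.orient_nonneg q hq) (hb.orient_nonneg t ht) hwt).ne' ?_
  exact orient_eq_zero_of_mem_segment hw

lemma isPlaneGraph_joinTrees (hb : IsBridge φ S l r) (hS : GenPos S)
    (hA : IsPlaneGraph (side (-φ) S) A) (hB : IsPlaneGraph (side φ S) B) :
    IsPlaneGraph S (joinTrees s(l, r) A B) := by
  have hAS := hA.of_subset (side_subset _ S)
  have hBS := hB.of_subset (side_subset _ S)
  have hAB : IsPlaneGraph S (A ∪ B) := by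
    refine ⟨fun e he => (Finset.mem_union.1 he).elim (hAS.isEdgeOn e) (hBS.isEdgeOn e),
      fun e he f hf hef => ?_⟩
    rcases Finset.mem_union.1 he with heA | heB <;> rcases Finset.mem_union.1 hf with hfA | hfB
    · exact hA.noCross e heA f hfA hef
    · exact noCrossPair_of_side (hA.isEdgeOn e heA) (hB.isEdgeOn f hfB)
    · exact (noCrossPair_of_side (hA.isEdgeOn f hfA) (hB.isEdgeOn e heB)).symm
    · exact hB.noCross e heB f hfB hef
  exact hAB.insert hb.isEdgeOn fun f hf hne => hb.noCrossPair hS (hAB.isEdgeOn f hf) hne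

lemma edgeReach_joinTrees (hb : IsBridge φ S l r) (hφ : ∀ p ∈ S, φ p ≠ 0)
    (hA : IsPST (side (-φ) S) A) (hB : IsPST (side φ S) B) (hp : p ∈ S) :
    EdgeReach (joinTrees s(l, r) A B) p l := by
  rcases mem_side_neg_or_mem_side hφ hp with hp | hp
  · exact (hA.edgeReach hp hb.left_mem_side).mono fun e he => mem_joinTrees.2 (.inr (.inl he))
  · refine (EdgeReach.mono (fun e he => mem_joinTrees.2 (.inr (.inr he)))
      (hB.edgeReach hp hb.right_mem_side)).tail ?_
    exact mem_joinTrees.2 (.inl Sym2.eq_swap)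

lemma isPST_joinTrees (hb : IsBridge φ S l r) (hS : GenPos S) (hφ : ∀ p ∈ S, φ p ≠ 0)
    (hA : IsPST (side (-φ) S) A) (hB : IsPST (side φ S) B) :
    IsPST S (joinTrees s(l, r) A B) := by
  have hplane := hb.isPlaneGraph_joinTrees hS hA.isPlaneGraph hB.isPlaneGraph
  refine ⟨hplane.isEdgeOn, hplane.noCross, ?_, fun p hp q hq =>
    (hb.edgeReach_joinTrees hφ hA hB hp).trans (hb.edgeReach_joinTrees hφ hA hB hq).symm⟩
  rw [hb.card_joinTrees hA.isPlaneGraph hB.isPlaneGraph, ← card_side_neg_add_card_side hφ,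
    ← hA.card_add_one, ← hB.card_add_one]
  omega

lemma disjoint_triInt_of_mem_joinTrees (hb : IsBridge φ S l r) {ψ : Pt →ᵃ[ℝ] ℝ}
    (hA : IsPlaneGraph (side ψ S) A) (hA' : IsPlaneGraph (side ψ S) A')
    (hB : IsPlaneGraph (side (-ψ) S) B) (hB' : IsPlaneGraph (side (-ψ) S) B')
    (hpq : s(p, q) ∈ A) (hpt : s(p, t) ∈ A')
    (hempty : ∀ g ∈ A ∪ A', Disjoint (segOf g) (triInt p q t)) :
    ∀ g ∈ joinTrees s(l, r) A B ∪ joinTrees s(l, r) A' B',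
      Disjoint (segOf g) (triInt p q t) := by
  obtain ⟨-, hp, hq⟩ := isEdgeOn_mk.1 (hA.isEdgeOn _ hpq)
  obtain ⟨-, -, ht⟩ := isEdgeOn_mk.1 (hA'.isEdgeOn _ hpt)
  intro g hg
  rw [joinTrees_union_joinTrees, mem_joinTrees] at hg
  rcases hg with rfl | hgA | hgB
  · exact hb.disjoint_triInt (side_subset _ S hp) (side_subset _ S hq) (side_subset _ S ht)
  · exact hempty g hgA
  · exact disjoint_segOf_triInt_of_side
      ((Finset.mem_union.1 hgB).elim (hB.isEdgeOn g) (hB'.isEdgeOn g)) hp hq ht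

end IsBridge

lemma bijOn_piecewise_union {α β : Type*} {f g : α → β} {s s' : Set α} {t t' : Set β}
    [∀ x, Decidable (x ∈ s)] (hf : Set.BijOn f s t) (hg : Set.BijOn g s' t') (hs : Disjoint s s')
    (ht : Disjoint t t') :
    Set.BijOn (s.piecewise f g) (s ∪ s') (t ∪ t') := by
  have hf' := hf.congr (s.piecewise_eqOn f g).symm
  have hg' := hg.congr ((s.piecewise_eqOn_compl f g).mono hs.subset_compl_left).symm
  exact hf'.union hg' ((Set.injOn_union hs).2 ⟨hf'.injOn, hg'.injOn, fun a ha b hb =>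
    ht.ne_of_mem (hf'.mapsTo ha) (hg'.mapsTo hb)⟩)

lemma IsBridge.simEmptyTriRot_joinTrees (hb : IsBridge φ S l r) (hS : GenPos S)
    (hφ : ∀ p ∈ S, φ p ≠ 0) (hAA' : SimEmptyTriRot (side (-φ) S) A A')
    (hBB' : SimEmptyTriRot (side φ S) B B') :
    SimEmptyTriRot S (joinTrees s(l, r) A B) (joinTrees s(l, r) A' B') := by
  obtain ⟨hA, hA', f, hf, hf_empty⟩ := hAA'
  obtain ⟨hB, hB', g, hg, hg_empty⟩ := hBB'
  refine ⟨hb.isPST_joinTrees hS hφ hA hB, hb.isPST_joinTrees hS hφ hA' hB', ?_⟩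
  have hAp := hA.isPlaneGraph
  have hA'p := hA'.isPlaneGraph
  have hBp := hB.isPlaneGraph
  have hB'p := hB'.isPlaneGraph
  have hdisj : Disjoint (A \ A') (B \ B') :=
    (hAp.disjoint_of_side hBp).mono Finset.sdiff_subset Finset.sdiff_subset
  have hdisj' : Disjoint (A' \ A) (B' \ B) :=
    (hA'p.disjoint_of_side hB'p).mono Finset.sdiff_subset Finset.sdiff_subset
  rw [joinTrees_sdiff_joinTrees (hb.notMem_union hAp hBp) (hAp.disjoint_of_side hB'p)
      (hA'p.disjoint_of_side hBp),
    joinTrees_sdiff_joinTrees (hb.notMem_union hA'p hB'p) (hA'p.disjoint_of_side hBp)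
      (hAp.disjoint_of_side hB'p), Finset.coe_union, Finset.coe_union]
  refine ⟨_, bijOn_piecewise_union hf hg (Finset.disjoint_coe.2 hdisj)
    (Finset.disjoint_coe.2 hdisj'), fun e he => ?_⟩
  rcases Finset.mem_union.1 he with he | he
  · obtain ⟨p, q, t, rfl, hpt, hempty⟩ := hf_empty e he
    have hpt' : s(p, t) ∈ A' := hpt ▸ (Finset.mem_sdiff.1 (hf.mapsTo he)).1
    refine ⟨p, q, t, rfl, (Set.piecewise_eq_of_mem _ _ _ he).trans hpt, ?_⟩
    exact hb.disjoint_triInt_of_mem_joinTrees hAp hA'p ((neg_neg φ).symm ▸ hBp)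
      ((neg_neg φ).symm ▸ hB'p) (Finset.mem_sdiff.1 he).1 hpt' hempty
  · obtain ⟨p, q, t, rfl, hpt, hempty⟩ := hg_empty e he
    have hpt' : s(p, t) ∈ B' := hpt ▸ (Finset.mem_sdiff.1 (hg.mapsTo he)).1
    refine ⟨p, q, t, rfl, (Set.piecewise_eq_of_notMem _ _ _
      (Finset.disjoint_right.1 hdisj he)).trans hpt, ?_⟩
    rw [joinTrees_comm _ A, joinTrees_comm _ A']
    exact hb.disjoint_triInt_of_mem_joinTrees hBp hB'p hAp hA'p (Finset.mem_sdiff.1 he).1 hpt'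
      hempty

end Sides

/-! ### Halving the point set -/

lemma exists_subset_card_eq_forall_lt {α β : Type*} [DecidableEq α] [LinearOrder β] {s : Finset α}
    {f : α → β} (hf : Set.InjOn f s) {m : ℕ} (hm : m ≤ s.card) :
    ∃ t ⊆ s, t.card = m ∧ ∀ x ∈ t, ∀ y ∈ s \ t, f x < f y := by
  induction m with
  | zero => exact ⟨∅, by simp⟩
  | succ m ih =>
    obtain ⟨t, hts, rfl, hlt⟩ := ih (by omega)
    have hne : (s \ t).Nonempty := Finset.sdiff_nonempty_of_card_lt_card hm
    obtain ⟨y, hy, hmin⟩ := (s \ t).exists_min_image f hne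
    obtain ⟨hys, hyt⟩ := Finset.mem_sdiff.1 hy
    refine ⟨insert y t, Finset.insert_subset hys hts, Finset.card_insert_of_notMem hyt,
      fun x hx z hz => ?_⟩
    obtain ⟨hzs, hz⟩ := Finset.mem_sdiff.1 hz
    obtain ⟨hzy, hzt⟩ := not_or.1 (Finset.mem_insert.not.1 hz)
    have hzst := Finset.mem_sdiff.2 ⟨hzs, hzt⟩
    rcases Finset.mem_insert.1 hx with rfl | hx
    · exact (hmin z hzst).lt_of_ne fun h => hzy (hf hzs hys h.symm)
    · exact hlt x hx z hzst

lemma exists_injOn_add_mul (S : Finset Pt) :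
    ∃ k : ℝ, Set.InjOn (fun p : Pt => p.1 + k * p.2) S := by
  obtain ⟨k, hk⟩ := Infinite.exists_notMem_finset
    ((S ×ˢ S).image fun q => -(q.1.1 - q.2.1) / (q.1.2 - q.2.2))
  refine ⟨k, fun p hp q hq (h : p.1 + k * p.2 = q.1 + k * q.2) => ?_⟩
  have hsnd : p.2 = q.2 := by
    by_contra hne
    have hne' := sub_ne_zero.2 hne
    refine hk (Finset.mem_image.2 ⟨(p, q), Finset.mem_product.2 ⟨hp, hq⟩, ?_⟩)
    dsimp only
    field_simp
    linarith
  exact Prod.ext (by rw [hsnd] at h; linarith) hsnd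

lemma exists_card_side_neg_eq {S : Finset Pt} {m : ℕ} (hm : m ≤ S.card) :
    ∃ L, (∀ p ∈ S, offset L p ≠ 0) ∧ (side (-offset L) S).card = m := by
  obtain ⟨k, hinj⟩ := exists_injOn_add_mul S
  obtain ⟨t, htS, rfl, hlt⟩ := exists_subset_card_eq_forall_lt hinj hm
  obtain ⟨c, hlo, hhi⟩ := Order.exists_between_finsets
    (lo := t.image fun p : Pt => p.1 + k * p.2) ((S \ t).image fun p : Pt => p.1 + k * p.2)
    (by simpa only [Finset.forall_mem_image] using hlt)
  simp only [Finset.forall_mem_image] at hlo hhi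
  have hneg : ∀ p ∈ t, offset (k, c) p < 0 := fun p hp => by
    rw [offset_apply]; exact sub_neg.2 (hlo hp)
  have hpos : ∀ p ∈ S, p ∉ t → 0 < offset (k, c) p := fun p hp hpt => by
    rw [offset_apply]; exact sub_pos.2 (hhi (Finset.mem_sdiff.2 ⟨hp, hpt⟩))
  refine ⟨(k, c), fun p hp => ?_, congrArg _ (Finset.ext fun p => ?_)⟩
  · by_cases hpt : p ∈ t
    · exact (hneg p hpt).ne
    · exact (hpos p hp hpt).ne'
  · refine mem_side.trans ⟨fun ⟨hp, hp0⟩ => ?_, fun hp => ⟨htS hp, neg_pos.2 (hneg p hp)⟩⟩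
    by_contra hpt
    exact (neg_pos.1 hp0).not_gt (hpos p hp hpt)

lemma exists_isBridge_card_side_neg_eq {S : Finset Pt} {m : ℕ} (hm : 0 < m) (hmS : m < S.card) :
    ∃ L l r, (∀ p ∈ S, offset L p ≠ 0) ∧ (side (-offset L) S).card = m ∧
      IsBridge (offset L) S l r := by
  obtain ⟨L, hL, hcard⟩ := exists_card_side_neg_eq hmS.le
  have hsum := card_side_neg_add_card_side hL
  obtain ⟨p, hp⟩ := Finset.card_pos.1 (hcard.symm ▸ hm)
  obtain ⟨q, hq⟩ : (side (offset L) S).Nonempty := Finset.card_pos.1 (by omega)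
  rw [mem_side] at hp hq
  obtain ⟨l, r, hb⟩ := exists_isBridge hL ⟨p, hp.1, neg_pos.1 hp.2⟩ ⟨q, hq⟩
  exact ⟨L, l, r, hL, hcard, hb⟩

theorem reachesIn_simEmptyTriRot {S : Finset Pt} (hS : GenPos S) {E E' : Finset (Sym2 Pt)}
    (hE : IsPST S E) (hE' : IsPST S E') :
    ReachesIn (SimEmptyTriRot S) (8 * S.card - 8) E E' := by
  induction hn : S.card using Nat.strong_induction_on generalizing S E E' with | _ n ih =>
  have hE_card := hE.card_add_one
  have hE'_card := hE'.card_add_one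
  rcases le_or_gt n 1 with hn1 | hn1
  · obtain rfl : E = ∅ := Finset.card_eq_zero.1 (by omega)
    obtain rfl : E' = ∅ := Finset.card_eq_zero.1 (by omega)
    exact .refl _ _ _
  obtain ⟨L, l, r, hL, hleft, hb⟩ :=
    exists_isBridge_card_side_neg_eq (S := S) (m := n / 2) (by omega) (by omega)
  have hright : (side (offset L) S).card = n - n / 2 := by
    have := card_side_neg_add_card_side hL
    omega
  obtain ⟨T, hT, hTb, hET⟩ := hb.exists_reachesIn hS hL hE
  obtain ⟨T', hT', hTb', hET'⟩ := hb.exists_reachesIn hS hL hE'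
  obtain ⟨hA, hB⟩ := hb.isPST_sideEdges hL hT hTb
  obtain ⟨hA', hB'⟩ := hb.isPST_sideEdges hL hT' hTb'
  have hleft_reach := ih _ (by omega) (hS.subset (side_subset _ S)) hA hA' hleft
  have hright_reach := ih _ (by omega) (hS.subset (side_subset _ S)) hB hB' hright
  have hmid : ReachesIn (SimEmptyTriRot S) (8 * (n - n / 2) - 8) T T' := by
    rw [hb.eq_joinTrees hL hT hTb, hb.eq_joinTrees hL hT' hTb']
    exact ReachesIn.map₂ (joinTrees s(l, r)) (hb.simEmptyTriRot_joinTrees hS hL) (.refl hA')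
      (.refl hB') (hleft_reach.mono (by omega)) hright_reach
  exact ((hET.trans hmid).trans (hET'.symm fun _ _ => SimEmptyTriRot.symm)).mono (by omega)

/-- any two noncrossing spanning trees on `n` points in general position are
connected by fewer than `8n` simultaneous empty-triangle rotations. -/
theorem stmt_4 :
    ∀ S : Finset Pt, GenPos S →
      ∀ E E' : Finset (Sym2 Pt), IsPST S E → IsPST S E' →
        ∃ m : ℕ, m < 8 * S.card ∧ ReachesIn (SimEmptyTriRot S) m E E' := by
  intro S hS E E' hE hE'
  have hcard := hE.card_add_one
  exact ⟨8 * S.card - 8, by omega, reachesIn_simEmptyTriRot hS hE hE'⟩
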